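/- The following conditions are equivalent: (1) the process (e^{-rt}c(t))_{t∈[0,T]} is a strict (F_t)-submartingale under Q_BS; (2) there exists a strictly positive process (G(t))_{t∈[0,T]} with G(0)=1, all paths non-increasing and continuous, which is a strict (F_t)-supermartingale under Q_BS and such that (e^{-rt}c(t)G(t))_{t∈[0,T]} is an (F_t)-martingale under Q_BS. Moreover, a process G as in (2), if it exists, is unique up to indistinguishability (two processes being indistinguishable if almost surely they agree for all t ∈ [0,T]). -/

import Mathlib

open MeasureTheory ProbabilityTheory

/-- The natural filtration of a real-valued process `W`. -/
def natFilt {Ω : Type*} (W : ℝ → Ω → ℝ) (t : ℝ) : MeasurableSpace Ω :=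
  ⨆ u ∈ Set.Icc (0 : ℝ) t, MeasurableSpace.comap (W u) inferInstance

/-- The σ-algebra generated by the `P`-null sets. -/
def sigmaNull {Ω : Type*} [MeasurableSpace Ω] (P : Measure Ω) : MeasurableSpace Ω :=
  MeasurableSpace.generateFrom {A | MeasurableSet A ∧ P A = 0}

/-- `W` is a standard Brownian motion under `P`: measurable, starting at `0`, with
continuous paths, Gaussian increments `W_t − W_s ∼ N(0, t−s)`, and increments independent
of the past. -/
def IsStdBM {Ω : Type*} [MeasurableSpace Ω] (P : Measure Ω) (W : ℝ → Ω → ℝ) : Prop :=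
  (∀ t : ℝ, Measurable (W t)) ∧
  (∀ ω, W 0 ω = 0) ∧
  (∀ ω, Continuous fun t => W t ω) ∧
  (∀ s t : ℝ, 0 ≤ s → s ≤ t →
    Measure.map (fun ω => W t ω - W s ω) P = gaussianReal 0 (t - s).toNNReal) ∧
  (∀ s t : ℝ, 0 ≤ s → s ≤ t →
    Indep (MeasurableSpace.comap (fun ω => W t ω - W s ω) inferInstance) (natFilt W s) P)

/-- `X` is a strict `(F_t)_{t∈[0,T]}`-submartingale under `Q`. -/
def StrictSubmartingaleOn {Ω : Type*} [MeasurableSpace Ω] (F : ℝ → MeasurableSpace Ω)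
    (Q : Measure Ω) (X : ℝ → Ω → ℝ) (T : ℝ) : Prop :=
  (∀ t ∈ Set.Icc (0 : ℝ) T, Measurable[F t] (X t) ∧ Integrable (X t) Q) ∧
  ∀ s t : ℝ, 0 ≤ s → s < t → t ≤ T → ∀ᵐ ω ∂Q, X s ω < (Q[X t | F s]) ω

/-- `X` is a strict `(F_t)_{t∈[0,T]}`-supermartingale under `Q`. -/
def StrictSupermartingaleOn {Ω : Type*} [MeasurableSpace Ω] (F : ℝ → MeasurableSpace Ω)
    (Q : Measure Ω) (X : ℝ → Ω → ℝ) (T : ℝ) : Prop :=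
  (∀ t ∈ Set.Icc (0 : ℝ) T, Measurable[F t] (X t) ∧ Integrable (X t) Q) ∧
  ∀ s t : ℝ, 0 ≤ s → s < t → t ≤ T → ∀ᵐ ω ∂Q, (Q[X t | F s]) ω < X s ω

/-- `X` is an `(F_t)_{t∈[0,T]}`-martingale under `Q`. -/
def MartingaleOn {Ω : Type*} [MeasurableSpace Ω] (F : ℝ → MeasurableSpace Ω)
    (Q : Measure Ω) (X : ℝ → Ω → ℝ) (T : ℝ) : Prop :=
  (∀ t ∈ Set.Icc (0 : ℝ) T, Measurable[F t] (X t) ∧ Integrable (X t) Q) ∧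
  ∀ s t : ℝ, 0 ≤ s → s ≤ t → t ≤ T → Q[X t | F s] =ᵐ[Q] X s

/-- The property required of the process `G` in condition (2) of STATEMENT 0: strictly
positive, `G(0) = 1`, all paths non-increasing and continuous on `[0,T]`, a strict
`(F_t)`-supermartingale under `Q_BS`, and such that `(e^{-rt}c(t)G(t))_{t∈[0,T]}` is an
`(F_t)`-martingale under `Q_BS`. -/
def GoodSurvival {Ω : Type*} [MeasurableSpace Ω] (F : ℝ → MeasurableSpace Ω)
    (Q_BS : Measure Ω) (c : ℝ → Ω → ℝ) (r T : ℝ) (G : ℝ → Ω → ℝ) : Prop :=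
  (∀ t ∈ Set.Icc (0 : ℝ) T, ∀ ω, 0 < G t ω) ∧
  (∀ ω, G 0 ω = 1) ∧
  (∀ ω, AntitoneOn (fun t => G t ω) (Set.Icc (0 : ℝ) T)) ∧
  (∀ ω, ContinuousOn (fun t => G t ω) (Set.Icc (0 : ℝ) T)) ∧
  StrictSupermartingaleOn F Q_BS G T ∧
  MartingaleOn F Q_BS (fun t ω => Real.exp (-(r * t)) * c t ω * G t ω) T


section aux
variable {Ω : Type*} [m0 : MeasurableSpace Ω]

def MPr (Q : Measure Ω) (m : MeasurableSpace Ω) (A B : Ω → ℝ) : Prop :=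
  ∀ Z : Ω → ℝ, Measurable[m] Z → (∀ ω, |Z ω| ≤ 1) → ∫ ω, Z ω * B ω ∂Q = ∫ ω, Z ω * A ω ∂Q

lemma bint (Q : Measure Ω) [IsFiniteMeasure Q] {f : Ω → ℝ} (hf : Measurable f) (C : ℝ)
    (hb : ∀ ω, |f ω| ≤ C) : Integrable f Q :=
  Integrable.of_bound hf.aestronglyMeasurable C (Filter.Eventually.of_forall hb)

noncomputable def mmn (a b : ℝ) : ℝ := a * b / (a + b)
noncomputable def rmd (a b a' b' : ℝ) : ℝ := (a * b' - a' * b) ^ 2 / ((a + b) ^ 2 * (a' + b'))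

lemma mm_id {a b a' b' : ℝ} (ha : 0 < a) (hb : 0 < b) (ha' : 0 < a') (hb' : 0 < b') :
    mmn a' b' + rmd a b a' b' = b ^ 2 / (a + b) ^ 2 * a' + a ^ 2 / (a + b) ^ 2 * b' := by
  unfold mmn rmd
  field_simp
  ring

lemma mm_eu {a b : ℝ} (ha : 0 < a) (hb : 0 < b) :
    mmn a b = b ^ 2 / (a + b) ^ 2 * a + a ^ 2 / (a + b) ^ 2 * b := by
  unfold mmn
  field_simp
  ring

lemma wt_le {a b : ℝ} (ha : 0 < a) (hb : 0 < b) : |b ^ 2 / (a + b) ^ 2| ≤ 1 := by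
  rw [abs_of_nonneg (by positivity), div_le_one (by positivity)]
  nlinarith [mul_pos ha hb]

lemma rmd_nonneg {a b a' b' : ℝ} (ha' : 0 < a') (hb' : 0 < b') : 0 ≤ rmd a b a' b' := by
  unfold rmd; positivity

lemma rmd_le' {a b a' b' : ℝ} (ha : 0 < a) (hb : 0 < b) (ha' : 0 < a') (hb' : 0 < b') :
    rmd a b a' b' ≤ a' + b' := by
  have h := mm_id ha hb ha' hb'
  have h1 := (abs_le.1 (wt_le ha hb)).2
  have h2 := (abs_le.1 (wt_le hb ha)).2
  rw [add_comm b a] at h2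
  have h3 : 0 ≤ mmn a' b' := by unfold mmn; positivity
  nlinarith

lemma rmd_le {a b a' b' : ℝ} (ha : 0 < a) (hb : 0 < b) (ha' : 0 < a') (hb' : 0 < b')
    (haa : a' ≤ a) (hbb : b' ≤ b) :
    rmd a b a' b' ≤ 4 * ((a - a') ^ 2 / a + (b - b') ^ 2 / b) := by
  set x := a - a' with hx
  set y := b - b' with hy
  have hx0 : 0 ≤ x := by linarith
  have hy0 : 0 ≤ y := by linarith
  have key : rmd a b a' b' ≤ 2 * ((x + y) ^ 2 / (a + b)) := by
    by_cases hc : (a + b) / 2 ≤ a' + b'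
    · have e : a * b' - a' * b = b * x - a * y := by rw [hx, hy]; ring
      unfold rmd
      rw [e]
      have h1 : (b * x - a * y) ^ 2 ≤ (a + b) ^ 2 * (x + y) ^ 2 := by
        rw [← mul_pow]
        apply sq_le_sq'
        · nlinarith [mul_nonneg ha.le hx0, mul_nonneg hb.le hx0, mul_nonneg ha.le hy0, mul_nonneg hb.le hy0]
        · nlinarith [mul_nonneg ha.le hx0, mul_nonneg hb.le hx0, mul_nonneg ha.le hy0, mul_nonneg hb.le hy0]
      calc (b * x - a * y) ^ 2 / ((a + b) ^ 2 * (a' + b'))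
          ≤ (a + b) ^ 2 * (x + y) ^ 2 / ((a + b) ^ 2 * ((a + b) / 2)) := by gcongr
        _ = 2 * ((x + y) ^ 2 / (a + b)) := by field_simp
    · push Not at hc
      have h1 := rmd_le' ha hb ha' hb'
      have h2 : a' + b' ≤ 2 * ((x + y) ^ 2 / (a + b)) := by
        rw [← mul_div_assoc, le_div_iff₀ (by positivity)]
        have : (a + b) / 2 ≤ x + y := by linarith
        nlinarith
      linarith
  have h2 : (x + y) ^ 2 / (a + b) ≤ 2 * (x ^ 2 / a + y ^ 2 / b) := by
    have h3 : x ^ 2 / (a + b) ≤ x ^ 2 / a := by gcongr; linarith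
    have h4 : y ^ 2 / (a + b) ≤ y ^ 2 / b := by gcongr; linarith
    have h5 : (x + y) ^ 2 / (a + b) ≤ (2 * x ^ 2 + 2 * y ^ 2) / (a + b) := by
      gcongr; nlinarith [sq_nonneg (x - y)]
    rw [add_div, mul_div_assoc, mul_div_assoc] at h5
    linarith
  linarith

lemma step_id (Q : Measure Ω) [IsFiniteMeasure Q] {ι : Type} {F : ι → MeasurableSpace Ω} {i : ι}
    (hm : F i ≤ m0)
    {X H K X' H' K' : Ω → ℝ} (hX' : Measurable X')
    (hH : Measurable[F i] H) (hK : Measurable[F i] K) (hX : Measurable X)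
    (hH' : Measurable H') (hK' : Measurable K')
    (X0 : ∀ ω, 0 < X ω ∧ X ω ≤ 1) (X0' : ∀ ω, 0 < X' ω ∧ X' ω ≤ 1)
    (H0 : ∀ ω, 0 < H ω ∧ H ω ≤ 1) (H0' : ∀ ω, 0 < H' ω ∧ H' ω ≤ 1)
    (K0 : ∀ ω, 0 < K ω ∧ K ω ≤ 1) (K0' : ∀ ω, 0 < K' ω ∧ K' ω ≤ 1)
    (h1 : MPr Q (F i) (fun ω => X ω * H ω) (fun ω => X' ω * H' ω))
    (h2 : MPr Q (F i) (fun ω => X ω * K ω) (fun ω => X' ω * K' ω)) :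
    ∫ ω, X' ω * rmd (H ω) (K ω) (H' ω) (K' ω) ∂Q =
      ∫ ω, X ω * mmn (H ω) (K ω) ∂Q - ∫ ω, X' ω * mmn (H' ω) (K' ω) ∂Q := by
  have g1 := h1 (fun ω => K ω ^ 2 / (H ω + K ω) ^ 2)
    ((hK.pow_const 2).div ((hH.add hK).pow_const 2)) (fun ω => wt_le (H0 ω).1 (K0 ω).1)
  have g2 := h2 (fun ω => H ω ^ 2 / (H ω + K ω) ^ 2)
    ((hH.pow_const 2).div ((hH.add hK).pow_const 2))
    (fun ω => by rw [add_comm (H ω)]; exact wt_le (K0 ω).1 (H0 ω).1)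
  have mH : Measurable H := hH.mono hm le_rfl
  have mK : Measurable K := hK.mono hm le_rfl
  have b1 : ∀ {x y z : ℝ}, |x| ≤ 1 → (0 < y ∧ y ≤ 1) → (0 < z ∧ z ≤ 1) → |x * (y * z)| ≤ 1 := by
    intro x y z hx hy hz
    rw [abs_mul, abs_of_pos (mul_pos hy.1 hz.1)]
    have : y * z ≤ 1 := mul_le_one₀ hy.2 hz.1.le hz.2
    exact mul_le_one₀ hx (mul_pos hy.1 hz.1).le this
  have wK : ∀ ω, |K ω ^ 2 / (H ω + K ω) ^ 2| ≤ 1 := fun ω => wt_le (H0 ω).1 (K0 ω).1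
  have wH : ∀ ω, |H ω ^ 2 / (H ω + K ω) ^ 2| ≤ 1 :=
    fun ω => by rw [add_comm (H ω)]; exact wt_le (K0 ω).1 (H0 ω).1
  have mm1 : ∀ {a b : ℝ}, (0 < a ∧ a ≤ 1) → (0 < b ∧ b ≤ 1) → |mmn a b| ≤ 2 := by
    intro a b ha hb
    have h := mm_eu ha.1 hb.1
    have e1 := wt_le ha.1 hb.1
    have e2 := wt_le hb.1 ha.1
    rw [add_comm b a] at e2
    rw [abs_le] at e1 e2
    have : 0 ≤ mmn a b := by unfold mmn; have := ha.1; have := hb.1; positivity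
    rw [abs_of_nonneg this, h]
    nlinarith [ha.1, hb.1, ha.2, hb.2]
  have rm1 : ∀ {a b a' b' : ℝ}, (0 < a ∧ a ≤ 1) → (0 < b ∧ b ≤ 1) → (0 < a' ∧ a' ≤ 1) →
      (0 < b' ∧ b' ≤ 1) → |rmd a b a' b'| ≤ 2 := by
    intro a b a' b' ha hb ha' hb'
    rw [abs_of_nonneg (rmd_nonneg ha'.1 hb'.1)]
    linarith [rmd_le' ha.1 hb.1 ha'.1 hb'.1, ha'.2, hb'.2]
  have xb : ∀ {x y : ℝ}, (0 < x ∧ x ≤ 1) → |y| ≤ 2 → |x * y| ≤ 2 := by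
    intro x y hx hy
    rw [abs_mul, abs_of_pos hx.1]
    nlinarith [abs_nonneg y, hx.1, hx.2]
  have i1 : Integrable (fun ω => X' ω * mmn (H' ω) (K' ω)) Q :=
    bint Q (hX'.mul ((hH'.mul hK').div (hH'.add hK'))) 2 (fun ω => xb (X0' ω) (mm1 (H0' ω) (K0' ω)))
  have i2 : Integrable (fun ω => X' ω * rmd (H ω) (K ω) (H' ω) (K' ω)) Q :=
    bint Q (by unfold rmd; fun_prop) 2
      (fun ω => xb (X0' ω) (rm1 (H0 ω) (K0 ω) (H0' ω) (K0' ω)))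
  have e1 : ∫ ω, X' ω * mmn (H' ω) (K' ω) ∂Q + ∫ ω, X' ω * rmd (H ω) (K ω) (H' ω) (K' ω) ∂Q
      = ∫ ω, K ω ^ 2 / (H ω + K ω) ^ 2 * (X' ω * H' ω) ∂Q
        + ∫ ω, H ω ^ 2 / (H ω + K ω) ^ 2 * (X' ω * K' ω) ∂Q := by
    rw [← integral_add i1 i2, ← integral_add]
    · congr 1; ext ω
      have := mm_id (H0 ω).1 (K0 ω).1 (H0' ω).1 (K0' ω).1
      rw [← mul_add, this]; ring
    · exact bint Q (by fun_prop) 1 (fun ω => b1 (wK ω) (X0' ω) (H0' ω))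
    · exact bint Q (by fun_prop) 1 (fun ω => b1 (wH ω) (X0' ω) (K0' ω))
  have e2 : ∫ ω, X ω * mmn (H ω) (K ω) ∂Q
      = ∫ ω, K ω ^ 2 / (H ω + K ω) ^ 2 * (X ω * H ω) ∂Q
        + ∫ ω, H ω ^ 2 / (H ω + K ω) ^ 2 * (X ω * K ω) ∂Q := by
    rw [← integral_add]
    · congr 1; ext ω
      rw [mm_eu (H0 ω).1 (K0 ω).1]; ring
    · exact bint Q (by fun_prop) 1 (fun ω => b1 (wK ω) (X0 ω) (H0 ω))
    · exact bint Q (by fun_prop) 1 (fun ω => b1 (wH ω) (X0 ω) (K0 ω))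
  simp only at g1 g2
  linarith

structure DM (Q : Measure Ω) (F : ℕ → MeasurableSpace Ω) (X K : ℕ → Ω → ℝ) : Prop where
  meas : ∀ i, Measurable[F i] (K i)
  pos : ∀ i ω, 0 < K i ω
  anti : ∀ i ω, K (i + 1) ω ≤ K i ω
  zero : ∀ ω, K 0 ω = 1
  mp : ∀ i j, i ≤ j → MPr Q (F i) (fun ω => X i ω * K i ω) (fun ω => X j ω * K j ω)

lemma DM.antitone {Q : Measure Ω} {F : ℕ → MeasurableSpace Ω} {X K : ℕ → Ω → ℝ}
    (h : DM Q F X K) (ω : Ω) : Antitone (fun i => K i ω) :=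
  antitone_nat_of_succ_le (fun i => h.anti i ω)

lemma DM.le_one {Q : Measure Ω} {F : ℕ → MeasurableSpace Ω} {X K : ℕ → Ω → ℝ}
    (h : DM Q F X K) (i : ℕ) (ω : Ω) : K i ω ≤ 1 := by
  rw [← h.zero ω]; exact h.antitone ω (Nat.zero_le i)

lemma key_bound (Q : Measure Ω) [IsFiniteMeasure Q] {F : ℕ → MeasurableSpace Ω}
    (hF : ∀ i, F i ≤ m0) {X H K : ℕ → Ω → ℝ} (hXm : ∀ i, Measurable (X i))
    (hX : ∀ i ω, 0 < X i ω ∧ X i ω ≤ 1) (hH : DM Q F X H) (hK : DM Q F X K) (k : ℕ) :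
    ∫ ω, X k ω * (H k ω - K k ω) ^ 2 ∂Q ≤ 32 * ∑ i ∈ Finset.range k,
      (∫ ω, X (i+1) ω * ((H i ω - H (i+1) ω) ^ 2 / H i ω) ∂Q
        + ∫ ω, X (i+1) ω * ((K i ω - K (i+1) ω) ^ 2 / K i ω) ∂Q) := by
  have mH : ∀ i, Measurable (H i) := fun i => (hH.meas i).mono (hF i) le_rfl
  have mK : ∀ i, Measurable (K i) := fun i => (hK.meas i).mono (hF i) le_rfl
  have stp : ∀ i j, i ≤ j → ∫ ω, X j ω * rmd (H i ω) (K i ω) (H j ω) (K j ω) ∂Q =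
      ∫ ω, X i ω * mmn (H i ω) (K i ω) ∂Q - ∫ ω, X j ω * mmn (H j ω) (K j ω) ∂Q := fun i j hij =>
    step_id Q (hF i) (hXm j) (hH.meas i) (hK.meas i) (hXm i) (mH j) (mK j) (hX i) (hX j)
      (fun ω => ⟨hH.pos i ω, hH.le_one i ω⟩) (fun ω => ⟨hH.pos j ω, hH.le_one j ω⟩)
      (fun ω => ⟨hK.pos i ω, hK.le_one i ω⟩) (fun ω => ⟨hK.pos j ω, hK.le_one j ω⟩)
      (hH.mp i j hij) (hK.mp i j hij)
  have ri : ∀ i j, Integrable (fun ω => X j ω * rmd (H i ω) (K i ω) (H j ω) (K j ω)) Q := by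
    intro i j
    refine bint Q ?_ 2 ?_
    · have := hXm j; have := mH i; have := mH j; have := mK i; have := mK j
      unfold rmd; fun_prop
    · intro ω
      have h1 := rmd_nonneg (a := H i ω) (b := K i ω) (hH.pos j ω) (hK.pos j ω)
      have h2 := rmd_le' (hH.pos i ω) (hK.pos i ω) (hH.pos j ω) (hK.pos j ω)
      rw [abs_of_nonneg (mul_nonneg (hX j ω).1.le h1)]
      have := hH.le_one j ω
      have := hK.le_one j ω
      nlinarith [(hX j ω).1, (hX j ω).2]
  have qi : ∀ {L : ℕ → Ω → ℝ} (_ : DM Q F X L) (i : ℕ), Integrable (fun ω => X (i+1) ω * ((L i ω - L (i+1) ω) ^ 2 / L i ω)) Q := by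
    intro L hL i
    have m1 : Measurable (L i) := (hL.meas i).mono (hF i) le_rfl
    have m2 : Measurable (L (i+1)) := (hL.meas (i+1)).mono (hF (i+1)) le_rfl
    refine bint Q ?_ 1 ?_
    · have := hXm (i+1); fun_prop
    · intro ω
      have p := hL.pos i ω
      have p' := hL.pos (i+1) ω
      have a := hL.anti i ω
      have o := hL.le_one i ω
      have x := hX (i+1) ω
      have h1 : (L i ω - L (i+1) ω) ^ 2 / L i ω ≤ 1 := by
        rw [div_le_one p]; nlinarith
      have h0 : 0 ≤ (L i ω - L (i+1) ω) ^ 2 / L i ω := by positivity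
      rw [abs_of_nonneg (mul_nonneg x.1.le h0)]
      exact mul_le_one₀ x.2 h0 h1
  have s1 : ∫ ω, X k ω * (H k ω - K k ω) ^ 2 ∂Q ≤
      8 * ∫ ω, X k ω * rmd (H 0 ω) (K 0 ω) (H k ω) (K k ω) ∂Q := by
    rw [← integral_const_mul]
    refine integral_mono ?_ ((ri 0 k).const_mul 8) ?_
    · refine bint Q ?_ 1 ?_
      · have := hXm k; have := mH k; have := mK k; fun_prop
      · intro ω
        rw [abs_of_nonneg (mul_nonneg (hX k ω).1.le (sq_nonneg _))]
        refine mul_le_one₀ (hX k ω).2 (sq_nonneg _) ?_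
        rw [sq_le_one_iff_abs_le_one, abs_le]
        constructor <;> linarith [hH.le_one k ω, hK.le_one k ω, hH.pos k ω, hK.pos k ω]
    · intro ω
      simp only [hH.zero, hK.zero]
      have : (H k ω - K k ω) ^ 2 ≤ 8 * rmd 1 1 (H k ω) (K k ω) := by
        unfold rmd
        have p1 := hH.pos k ω
        have p2 := hK.pos k ω
        rw [← mul_div_assoc, le_div_iff₀ (by positivity)]
        have : (H k ω - K k ω) ^ 2 * ((1 + 1) ^ 2 * (H k ω + K k ω)) ≤ (H k ω - K k ω) ^ 2 * 8 := by
          gcongr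
          linarith [hH.le_one k ω, hK.le_one k ω]
        linarith [this]
      nlinarith [(hX k ω).1]
  rw [stp 0 k (Nat.zero_le k)] at s1
  have tel : ∫ ω, X 0 ω * mmn (H 0 ω) (K 0 ω) ∂Q - ∫ ω, X k ω * mmn (H k ω) (K k ω) ∂Q
      = ∑ i ∈ Finset.range k, ∫ ω, X (i+1) ω * rmd (H i ω) (K i ω) (H (i+1) ω) (K (i+1) ω) ∂Q := by
    rw [← Finset.sum_range_sub' (fun i => ∫ ω, X i ω * mmn (H i ω) (K i ω) ∂Q)]
    exact Finset.sum_congr rfl (fun i _ => (stp i (i+1) (Nat.le_succ i)).symm)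
  rw [tel] at s1
  refine s1.trans ?_
  have : ∑ i ∈ Finset.range k, ∫ ω, X (i+1) ω * rmd (H i ω) (K i ω) (H (i+1) ω) (K (i+1) ω) ∂Q
      ≤ ∑ i ∈ Finset.range k, 4 * (∫ ω, X (i+1) ω * ((H i ω - H (i+1) ω) ^ 2 / H i ω) ∂Q
        + ∫ ω, X (i+1) ω * ((K i ω - K (i+1) ω) ^ 2 / K i ω) ∂Q) := by
    refine Finset.sum_le_sum (fun i _ => ?_)
    rw [← integral_add (qi hH i) (qi hK i), ← integral_const_mul]
    refine integral_mono (ri i (i+1)) (((qi hH i).add (qi hK i)).const_mul 4) ?_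
    intro ω
    have h := rmd_le (hH.pos i ω) (hK.pos i ω) (hH.pos (i+1) ω) (hK.pos (i+1) ω) (hH.anti i ω) (hK.anti i ω)
    have := mul_le_mul_of_nonneg_left h (hX (i+1) ω).1.le
    simp only
    linarith
  rw [← Finset.mul_sum] at this
  linarith

/-- energy estimate -/
lemma energy (Q : Measure Ω) [IsFiniteMeasure Q] {F : ℕ → MeasurableSpace Ω}
    (hF : ∀ i, F i ≤ m0) (hFm : Monotone F) {X K : ℕ → Ω → ℝ} (hXm : ∀ i, Measurable (X i))
    (hX : ∀ i ω, 0 < X i ω ∧ X i ω ≤ 1) (hK : DM Q F X K)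
    (hp : ∀ i, Measurable[F i] (K (i+1))) {w : Ω → ℝ} (hw : Measurable w) (a p : ℕ)
    (hw1 : ∀ ω, w ω ≤ 1)
    (hb : ∀ j < p, ∀ ω, |X (a + p) ω - X (a + j) ω| ≤ w ω) :
    ∫ ω, X (a+p) ω * ((K a ω - K (a+p) ω) ^ 2 / K a ω) ∂Q ≤
      2 * ∫ ω, (K a ω - K (a+p) ω) * |w ω| ∂Q := by
  have mK : ∀ i, Measurable (K i) := fun i => (hK.meas i).mono (hF i) le_rfl
  have KA : ∀ {i j : ℕ} (ω), i ≤ j → K j ω ≤ K i ω := fun ω h => hK.antitone ω h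
  -- weights
  let Z : ℕ → Ω → ℝ := fun j ω => (K (a+j) ω - K (a+j+1) ω) / K a ω
  have Z0 : ∀ j ω, 0 ≤ Z j ω := fun j ω =>
    div_nonneg (sub_nonneg.2 (KA ω (by lia))) (hK.pos a ω).le
  have Z1 : ∀ j ω, Z j ω ≤ 1 := fun j ω => by
    simp only [Z]
    rw [div_le_one (hK.pos a ω)]
    linarith [hK.pos (a+j+1) ω, KA (i := a) (j := a+j) ω (by lia)]
  have Zm : ∀ j, Measurable[F (a+j)] (Z j) := fun j =>
    ((hK.meas (a+j)).sub (hp (a+j))).div ((hK.meas a).mono (hFm (by lia)) le_rfl)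
  have Zm' : ∀ j, Measurable (Z j) := fun j => (Zm j).mono (hF _) le_rfl
  have bd : ∀ {x y z u : ℝ}, 0 ≤ x → x ≤ 1 → 0 < y → y ≤ 1 → 0 < z → z ≤ 1 → |u| ≤ 1 → |x * (y * (z * u))| ≤ 1 := by
    intro x y z u hx hx1 hy hy1 hz hz1 hu
    rw [abs_mul, abs_mul, abs_mul, abs_of_nonneg hx, abs_of_pos hy, abs_of_pos hz]
    exact mul_le_one₀ hx1 (by positivity) (mul_le_one₀ hy1 (by positivity) (mul_le_one₀ hz1 (by positivity) hu))
  have bd3 : ∀ {x y z : ℝ}, 0 ≤ x → x ≤ 1 → 0 < y → y ≤ 1 → 0 < z → z ≤ 1 → |x * (y * z)| ≤ 1 := by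
    intro x y z hx hx1 hy hy1 hz hz1
    simpa using bd (u := 1) hx hx1 hy hy1 hz hz1 (by simp)
  have I1 : ∀ j k l : ℕ, Integrable (fun ω => Z j ω * (X k ω * K l ω)) Q := fun j k l =>
    bint Q (by have := Zm' j; have := hXm k; have := mK l; fun_prop) 1
      (fun ω => bd3 (Z0 j ω) (Z1 j ω) (hX k ω).1 (hX k ω).2 (hK.pos l ω) (hK.le_one l ω))
  have wi : ∀ i k : ℕ, i ≤ k → p ≠ 0 → Integrable (fun ω => (K i ω - K k ω) * |w ω|) Q := by
    intro i k hik hp0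
    refine bint Q (by have := mK i; have := mK k; fun_prop) 1 ?_
    intro ω
    have hw0 : 0 ≤ w ω := (abs_nonneg _).trans (hb 0 (by lia) ω)
    have := KA ω hik
    rw [abs_of_nonneg (by rw [abs_of_nonneg hw0]; exact mul_nonneg (by linarith) hw0), abs_of_nonneg hw0]
    exact mul_le_one₀ (by linarith [hK.le_one i ω, hK.pos k ω]) hw0 (hw1 ω)
  rcases Nat.eq_zero_or_pos p with rfl | hp0
  · simp
  have st : ∀ j < p, ∫ ω, Z j ω * (X (a+p) ω * K (a+j) ω) ∂Q - ∫ ω, Z j ω * (X (a+p) ω * K (a+p) ω) ∂Q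
      ≤ ∫ ω, (K (a+j) ω - K (a+j+1) ω) * |w ω| ∂Q := by
    intro j hj
    rw [hK.mp (a+j) (a+p) (by lia) (Z j) (Zm j) (fun ω => by rw [abs_of_nonneg (Z0 j ω)]; exact Z1 j ω),
      ← integral_sub (I1 j (a+p) (a+j)) (I1 j (a+j) (a+j))]
    refine integral_mono ((I1 j (a+p) (a+j)).sub (I1 j (a+j) (a+j))) (wi _ _ (by lia) (by lia)) ?_
    intro ω
    have hw0 : 0 ≤ w ω := (abs_nonneg _).trans (hb 0 (by lia) ω)
    have e : Z j ω * K (a+j) ω ≤ K (a+j) ω - K (a+j+1) ω := by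
      simp only [Z]
      rw [div_mul_eq_mul_div, div_le_iff₀ (hK.pos a ω)]
      exact mul_le_mul_of_nonneg_left (KA ω (by lia)) (sub_nonneg.2 (KA ω (by lia)))
    have e0 : 0 ≤ Z j ω * K (a+j) ω := mul_nonneg (Z0 j ω) (hK.pos _ ω).le
    have h3 := (le_abs_self _).trans (hb j hj ω)
    simp only [abs_of_nonneg hw0]
    calc Z j ω * (X (a+p) ω * K (a+j) ω) - Z j ω * (X (a+j) ω * K (a+j) ω)
        = (Z j ω * K (a+j) ω) * (X (a+p) ω - X (a+j) ω) := by ring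
      _ ≤ (Z j ω * K (a+j) ω) * w ω := by gcongr
      _ ≤ _ := by gcongr
  have tel : ∫ ω, (K a ω - K (a+p) ω) * |w ω| ∂Q =
      ∑ j ∈ Finset.range p, ∫ ω, (K (a+j) ω - K (a+j+1) ω) * |w ω| ∂Q := by
    rw [← integral_finsetSum _ (fun j _ => wi _ _ (by lia) (by lia))]
    congr 1; ext ω
    have := Finset.sum_range_sub' (fun j => K (a+j) ω) p
    rw [← Finset.sum_mul]
    simp only [← add_assoc, add_zero] at this
    rw [this]
  rw [tel, Finset.mul_sum]
  have low : ∫ ω, X (a+p) ω * ((K a ω - K (a+p) ω) ^ 2 / K a ω) ∂Q ≤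
      ∑ j ∈ Finset.range p, 2 * (∫ ω, Z j ω * (X (a+p) ω * K (a+j) ω) ∂Q - ∫ ω, Z j ω * (X (a+p) ω * K (a+p) ω) ∂Q) := by
    have : ∑ j ∈ Finset.range p, 2 * (∫ ω, Z j ω * (X (a+p) ω * K (a+j) ω) ∂Q - ∫ ω, Z j ω * (X (a+p) ω * K (a+p) ω) ∂Q)
      = ∫ ω, ∑ j ∈ Finset.range p, 2 * (Z j ω * (X (a+p) ω * K (a+j) ω) - Z j ω * (X (a+p) ω * K (a+p) ω)) ∂Q := by
      rw [integral_finsetSum]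
      swap
      · intro j _
        exact ((I1 j (a+p) (a+j)).sub (I1 j (a+p) (a+p))).const_mul 2
      refine Finset.sum_congr rfl (fun j _ => ?_)
      rw [integral_const_mul, integral_sub (I1 j _ _) (I1 j _ _)]
    rw [this]
    refine integral_mono_of_nonneg (Filter.Eventually.of_forall fun ω => ?_)
      (integrable_finsetSum _ (fun j _ => ((I1 j _ _).sub (I1 j _ _)).const_mul 2)) (Filter.Eventually.of_forall fun ω => ?_)
    · have := (hX (a+p) ω).1; have := hK.pos a ω
      show 0 ≤ X (a+p) ω * ((K a ω - K (a+p) ω) ^ 2 / K a ω)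
      positivity
    · show X (a+p) ω * ((K a ω - K (a+p) ω) ^ 2 / K a ω) ≤ _
      have e : (K a ω - K (a+p) ω) ^ 2 = ∑ j ∈ Finset.range p,
          ((K (a+j) ω - K (a+p) ω) ^ 2 - (K (a+j+1) ω - K (a+p) ω) ^ 2) := by
        have := Finset.sum_range_sub' (fun j => (K (a+j) ω - K (a+p) ω) ^ 2) p
        simp only [← add_assoc, add_zero] at this
        rw [this]; simp
      rw [e, Finset.sum_div, Finset.mul_sum]
      refine Finset.sum_le_sum (fun j _ => ?_)
      have h : (K (a+j) ω - K (a+p) ω) ^ 2 - (K (a+j+1) ω - K (a+p) ω) ^ 2 ≤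
          2 * ((K (a+j) ω - K (a+j+1) ω) * (K (a+j) ω - K (a+p) ω)) := by nlinarith [sq_nonneg (K (a+j) ω - K (a+j+1) ω)]
      have hx := (hX (a+p) ω).1
      have hk := hK.pos a ω
      calc _ ≤ X (a+p) ω * (2 * ((K (a+j) ω - K (a+j+1) ω) * (K (a+j) ω - K (a+p) ω)) / K a ω) := by gcongr
        _ = _ := by simp only [Z]; ring
  refine low.trans (Finset.sum_le_sum fun j hj => ?_)
  have := st j (Finset.mem_range.1 hj)
  linarith

end aux


set_option linter.unusedSectionVars false
section aux2
variable {Ω : Type*} [m0 : MeasurableSpace Ω]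

lemma cint (Q : Measure Ω) [IsFiniteMeasure Q] {ι : Type*} {F : ι → MeasurableSpace Ω} {i : ι}
    (hm : F i ≤ m0) {Y f : Ω → ℝ} (hY : Measurable[F i] Y) (hb : ∀ ω, |Y ω| ≤ 1)
    (hf : Integrable f Q) : ∫ ω, Y ω * (Q[f | F i]) ω ∂Q = ∫ ω, Y ω * f ω ∂Q := by
  have hYf : Integrable (Y * f) Q := by
    refine hf.bdd_mul (c := 1) (hY.mono hm le_rfl).aestronglyMeasurable (Filter.Eventually.of_forall hb)
  have := condExp_mul_of_stronglyMeasurable_left (μ := Q) hY.stronglyMeasurable hYf hf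
  rw [← integral_condExp hm (f := fun ω => Y ω * f ω)]
  exact (integral_congr_ae this).symm

lemma DM.reindex {Q : Measure Ω} {F : ℕ → MeasurableSpace Ω} {X K : ℕ → Ω → ℝ}
    (h : DM Q F X K) (φ : ℕ → ℕ) (hφ : Monotone φ) (h0 : φ 0 = 0) :
    DM Q (fun i => F (φ i)) (fun i => X (φ i)) (fun i => K (φ i)) where
  meas i := h.meas _
  pos i ω := h.pos _ ω
  anti i ω := h.antitone ω (hφ (Nat.le_succ i))
  zero ω := by rw [h0]; exact h.zero ω
  mp i j hij := h.mp _ _ (hφ hij)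

noncomputable def tt (n j : ℕ) : ℝ := (j : ℝ) / 2 ^ n

lemma tt_mono (n : ℕ) : Monotone (tt n) := by
  intro i j h
  unfold tt
  have : (i : ℝ) ≤ j := by exact_mod_cast h
  gcongr

lemma tt_nonneg (n j : ℕ) : 0 ≤ tt n j := by unfold tt; positivity

lemma tt_le_one {n j : ℕ} (h : j ≤ 2 ^ n) : tt n j ≤ 1 := by
  unfold tt
  rw [div_le_one (by positivity)]
  exact_mod_cast h

lemma tt_ref {m n : ℕ} (h : m ≤ n) (i : ℕ) : tt n (i * 2 ^ (n - m)) = tt m i := by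
  unfold tt
  obtain ⟨k, rfl⟩ := Nat.exists_eq_add_of_le h
  simp only [Nat.add_sub_cancel_left]
  push_cast
  rw [pow_add]
  field_simp

noncomputable def ee (Q : Measure Ω) (F : ℝ → MeasurableSpace Ω) (X : ℝ → Ω → ℝ) (n j : ℕ) (ω : Ω) : ℝ :=
  max (X (tt n j) ω) ((Q[X (tt n (j+1)) | F (tt n j)]) ω)

noncomputable def Gd (Q : Measure Ω) (F : ℝ → MeasurableSpace Ω) (X : ℝ → Ω → ℝ) (n : ℕ) : ℕ → Ω → ℝ
  | 0 => fun _ => 1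
  | j + 1 => fun ω => Gd Q F X n j ω * (X (tt n j) ω / ee Q F X n j ω)

noncomputable def Gr (Q : Measure Ω) (F : ℝ → MeasurableSpace Ω) (X : ℝ → Ω → ℝ) (n : ℕ) (u : ℝ) (ω : Ω) : ℝ :=
  Gd Q F X n ⌊u * 2 ^ n⌋₊ ω

open Classical in
noncomputable def wmod (X : ℝ → Ω → ℝ) (n : ℕ) (ω : Ω) : ℝ :=
  ⨆ p : ℚ × ℚ, if |(p.1 : ℝ) - p.2| ≤ 1 / 2 ^ n ∧ (p.1 : ℝ) ∈ Set.Icc (0:ℝ) 1 ∧ (p.2 : ℝ) ∈ Set.Icc (0:ℝ) 1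
    then |X p.1 ω - X p.2 ω| else 0

/-- standing assumptions -/
structure Std (Q : Measure Ω) (F : ℝ → MeasurableSpace Ω) (X : ℝ → Ω → ℝ) : Prop where
  mono : Monotone F
  le : ∀ t, F t ≤ m0
  meas : ∀ t, Measurable[F t] (X t)
  pos : ∀ t ω, 0 < X t ω
  le_one : ∀ t ω, X t ω ≤ 1
  cont : ∀ ω, Continuous fun t => X t ω

variable {Q : Measure Ω} [IsFiniteMeasure Q] {F : ℝ → MeasurableSpace Ω} {X : ℝ → Ω → ℝ}

lemma Std.meas' (h : Std Q F X) (t : ℝ) : Measurable (X t) := (h.meas t).mono (h.le t) le_rfl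

lemma Std.int (h : Std Q F X) (t : ℝ) : Integrable (X t) Q :=
  bint Q (h.meas' t) 1 (fun ω => by rw [abs_of_pos (h.pos t ω)]; exact h.le_one t ω)

lemma ee_meas (h : Std Q F X) (n j : ℕ) : Measurable[F (tt n j)] (ee Q F X n j) :=
  Measurable.max (h.meas _) stronglyMeasurable_condExp.measurable

lemma ee_ge (n j : ℕ) (ω : Ω) : X (tt n j) ω ≤ ee Q F X n j ω := le_max_left _ _

lemma ee_pos (h : Std Q F X) (n j : ℕ) (ω : Ω) : 0 < ee Q F X n j ω :=
  (h.pos _ ω).trans_le (ee_ge n j ω)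

lemma ee_ae (hsub : ∀ s t, s ≤ t → X s ≤ᵐ[Q] Q[X t | F s]) (n j : ℕ) :
    ee Q F X n j =ᵐ[Q] Q[X (tt n (j+1)) | F (tt n j)] := by
  filter_upwards [hsub _ _ (tt_mono n (Nat.le_succ j))] with ω hω
  exact max_eq_right hω

lemma Gd_pred (h : Std Q F X) (n j : ℕ) :
    Measurable[F (tt n j)] (Gd Q F X n j) ∧ Measurable[F (tt n j)] (Gd Q F X n (j+1)) := by
  induction j with
  | zero =>
    refine ⟨measurable_const, ?_⟩
    exact (measurable_const (a := (1:ℝ))).mul ((h.meas _).div (ee_meas h n 0))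
  | succ j ih =>
    have h1 : Measurable[F (tt n (j+1))] (Gd Q F X n (j+1)) :=
      ih.2.mono (h.mono (tt_mono n (Nat.le_succ j))) le_rfl
    exact ⟨h1, h1.mul ((h.meas _).div (ee_meas h n (j+1)))⟩

lemma Gd_pos (h : Std Q F X) (n j : ℕ) (ω : Ω) : 0 < Gd Q F X n j ω := by
  induction j with
  | zero => simp [Gd]
  | succ j ih => exact mul_pos ih (div_pos (h.pos _ ω) (ee_pos h n j ω))

lemma Gd_anti (h : Std Q F X) (n j : ℕ) (ω : Ω) : Gd Q F X n (j+1) ω ≤ Gd Q F X n j ω := by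
  have : X (tt n j) ω / ee Q F X n j ω ≤ 1 := by
    rw [div_le_one (ee_pos h n j ω)]; exact ee_ge n j ω
  exact mul_le_of_le_one_right (Gd_pos h n j ω).le this

lemma Gd_le (h : Std Q F X) (n j : ℕ) (ω : Ω) : Gd Q F X n j ω ≤ 1 :=
  antitone_nat_of_succ_le (f := fun j => Gd Q F X n j ω) (fun j => Gd_anti h n j ω) (Nat.zero_le j)

lemma Gd_DM (h : Std Q F X) (hsub : ∀ s t, s ≤ t → X s ≤ᵐ[Q] Q[X t | F s]) (n : ℕ) :
    DM Q (fun j => F (tt n j)) (fun j => X (tt n j)) (Gd Q F X n) where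
  meas i := (Gd_pred h n i).1
  pos i ω := Gd_pos h n i ω
  anti i ω := Gd_anti h n i ω
  zero ω := rfl
  mp i j hij := by
    intro Z hZ hb
    induction j, hij using Nat.le_induction with
    | base => rfl
    | succ j hij ih =>
      rw [← ih]
      have hY : Measurable[F (tt n j)] (fun ω => Z ω * Gd Q F X n (j+1) ω) :=
        (hZ.mono (h.mono (tt_mono n hij)) le_rfl).mul (Gd_pred h n j).2
      have hYb : ∀ ω, |Z ω * Gd Q F X n (j+1) ω| ≤ 1 := fun ω => by
        rw [abs_mul, abs_of_pos (Gd_pos h n (j+1) ω)]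
        exact mul_le_one₀ (hb ω) (Gd_pos h n _ ω).le (Gd_le h n _ ω)
      have e := cint Q (F := F) (i := tt n j) (h.le _) hY hYb (h.int (tt n (j+1)))
      calc ∫ ω, Z ω * (X (tt n (j+1)) ω * Gd Q F X n (j+1) ω) ∂Q
          = ∫ ω, Z ω * Gd Q F X n (j+1) ω * X (tt n (j+1)) ω ∂Q := by
            congr 1; ext ω; ring
        _ = _ := e.symm
        _ = ∫ ω, Z ω * (X (tt n j) ω * Gd Q F X n j ω) ∂Q := by
            apply integral_congr_ae
            filter_upwards [ee_ae hsub n j] with ω hω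
            rw [← hω]
            have := ee_pos h n j ω
            simp only [Gd]
            field_simp

lemma Gr_dy {m n : ℕ} (hmn : m ≤ n) (i : ℕ) : Gr Q F X n (tt m i) = Gd Q F X n (i * 2 ^ (n - m)) := by
  ext ω
  unfold Gr
  rw [← tt_ref hmn]
  have : tt n (i * 2 ^ (n - m)) * 2 ^ n = ((i * 2 ^ (n - m) : ℕ) : ℝ) := by
    unfold tt; field_simp
  rw [this, Nat.floor_natCast]

lemma Gr_DM (h : Std Q F X) (hsub : ∀ s t, s ≤ t → X s ≤ᵐ[Q] Q[X t | F s]) {m n : ℕ} (hmn : m ≤ n) :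
    DM Q (fun j => F (tt m j)) (fun j => X (tt m j)) (fun j => Gr Q F X n (tt m j)) := by
  have := (Gd_DM h hsub n).reindex (fun i => i * 2 ^ (n - m))
    (fun i j hij => Nat.mul_le_mul_right _ hij) (by simp)
  simpa only [tt_ref hmn, Gr_dy hmn] using this

lemma Gr_pos (h : Std Q F X) (n : ℕ) (u : ℝ) (ω : Ω) : 0 < Gr Q F X n u ω := Gd_pos h n _ ω
lemma Gr_le (h : Std Q F X) (n : ℕ) (u : ℝ) (ω : Ω) : Gr Q F X n u ω ≤ 1 := Gd_le h n _ ω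
lemma Gr_zero (n : ℕ) (ω : Ω) : Gr Q F X n 0 ω = 1 := by simp [Gr, Gd]
lemma Gr_anti (h : Std Q F X) (n : ℕ) (ω : Ω) : Antitone (fun u => Gr Q F X n u ω) := by
  intro u v huv
  apply antitone_nat_of_succ_le (f := fun j => Gd Q F X n j ω) (fun j => Gd_anti h n j ω)
  apply Nat.floor_mono
  gcongr

lemma Gr_meas (h : Std Q F X) (n : ℕ) {u : ℝ} (hu : 0 ≤ u) : Measurable[F u] (Gr Q F X n u) := by
  refine (Gd_pred h n ⌊u * 2 ^ n⌋₊).1.mono (h.mono ?_) le_rfl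
  unfold tt
  rw [div_le_iff₀ (by positivity)]
  exact Nat.floor_le (by positivity)

-- modulus
lemma wterm (h : Std Q F X) (p q : ℝ) (ω : Ω) : |X p ω - X q ω| ≤ 1 := by
  rw [abs_le]
  constructor <;> linarith [h.pos p ω, h.pos q ω, h.le_one p ω, h.le_one q ω]

open Classical in
lemma wbdd (h : Std Q F X) (n : ℕ) (ω : Ω) : BddAbove (Set.range fun p : ℚ × ℚ =>
    if |(p.1 : ℝ) - p.2| ≤ 1 / 2 ^ n ∧ (p.1 : ℝ) ∈ Set.Icc (0:ℝ) 1 ∧ (p.2 : ℝ) ∈ Set.Icc (0:ℝ) 1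
    then |X p.1 ω - X p.2 ω| else 0) := by
  refine ⟨1, ?_⟩
  rintro _ ⟨p, rfl⟩
  dsimp only
  split_ifs
  · exact wterm h _ _ ω
  · exact zero_le_one

lemma wmod_meas (h : Std Q F X) (n : ℕ) : Measurable (wmod X n) := by
  unfold wmod
  refine Measurable.iSup (fun p => ?_)
  split_ifs
  · have := h.meas' p.1; have := h.meas' p.2
    fun_prop
  · exact measurable_const

lemma wmod_nonneg (n : ℕ) (ω : Ω) : 0 ≤ wmod X n ω := by
  refine Real.iSup_nonneg (fun p => ?_)
  split_ifs
  · exact abs_nonneg _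
  · exact le_rfl

lemma wmod_le_of {n : ℕ} {ω : Ω} {C : ℝ} (hC : 0 ≤ C)
    (h : ∀ p q : ℝ, p ∈ Set.Icc (0:ℝ) 1 → q ∈ Set.Icc (0:ℝ) 1 → |p - q| ≤ 1 / 2 ^ n → |X p ω - X q ω| ≤ C) :
    wmod X n ω ≤ C := by
  refine ciSup_le (fun p => ?_)
  split_ifs with hp
  · exact h _ _ hp.2.1 hp.2.2 hp.1
  · exact hC

lemma wmod_le (h : Std Q F X) (n : ℕ) (ω : Ω) : wmod X n ω ≤ 1 :=
  wmod_le_of zero_le_one (fun p q _ _ _ => wterm h p q ω)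

lemma wmod_ge (h : Std Q F X) (n : ℕ) (ω : Ω) {p q : ℚ} (hp : (p:ℝ) ∈ Set.Icc (0:ℝ) 1)
    (hq : (q:ℝ) ∈ Set.Icc (0:ℝ) 1) (hpq : |(p:ℝ) - q| ≤ 1 / 2 ^ n) : |X p ω - X q ω| ≤ wmod X n ω := by
  have := le_ciSup (wbdd h n ω) (p, q)
  dsimp only at this
  rw [if_pos ⟨hpq, hp, hq⟩] at this
  exact this

lemma wmod_tt (h : Std Q F X) {m n i j : ℕ} (ω : Ω) (hi : i ≤ 2 ^ n) (hj : j ≤ 2 ^ n)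
    (hpq : |tt n i - tt n j| ≤ 1 / 2 ^ m) : |X (tt n i) ω - X (tt n j) ω| ≤ wmod X m ω := by
  have e : ∀ k, tt n k = (((k : ℚ) / 2 ^ n : ℚ) : ℝ) := fun k => by unfold tt; push_cast; rfl
  have h1 := tt_le_one hi
  have h2 := tt_le_one hj
  have h3 := tt_nonneg n i
  have h4 := tt_nonneg n j
  rw [e] at h1 h3 hpq ⊢
  rw [e j] at h2 h4 hpq ⊢
  exact wmod_ge h m ω ⟨h3, h1⟩ ⟨h4, h2⟩ hpq

lemma wmod_tendsto (h : Std Q F X) : Filter.Tendsto (fun n => ∫ ω, wmod X n ω ∂Q) Filter.atTop (nhds 0) := by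
  have : (0:ℝ) = ∫ ω, (0:ℝ) ∂Q := by simp
  rw [this]
  refine tendsto_integral_of_dominated_convergence (fun _ => 1) (fun n => (wmod_meas h n).aestronglyMeasurable)
    (integrable_const 1) (fun n => Filter.Eventually.of_forall fun ω => ?_) (Filter.Eventually.of_forall fun ω => ?_)
  · rw [Real.norm_eq_abs, abs_of_nonneg (wmod_nonneg n ω)]; exact wmod_le h n ω
  · have huc : UniformContinuousOn (fun t => X t ω) (Set.Icc (0:ℝ) 1) :=
      isCompact_Icc.uniformContinuousOn_of_continuous (h.cont ω).continuousOn
    rw [Metric.uniformContinuousOn_iff] at huc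
    rw [Metric.tendsto_atTop]
    intro ε hε
    obtain ⟨δ, hδ, hd⟩ := huc (ε / 2) (by positivity)
    obtain ⟨N, hN⟩ := exists_pow_lt_of_lt_one hδ (show (1/2:ℝ) < 1 by norm_num)
    refine ⟨N, fun n hn => ?_⟩
    rw [Real.dist_eq, sub_zero, abs_of_nonneg (wmod_nonneg n ω)]
    have : wmod X n ω ≤ ε / 2 := by
      refine wmod_le_of (by positivity) (fun p q hp hq hpq => ?_)
      refine (hd p hp q hq ?_).le
      rw [Real.dist_eq]
      refine hpq.trans_lt (lt_of_le_of_lt ?_ hN)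
      rw [one_div, ← inv_pow, one_div]
      exact pow_le_pow_of_le_one (by norm_num) (by norm_num) hn
    linarith

lemma wmod_int (h : Std Q F X) (n : ℕ) : Integrable (wmod X n) Q :=
  bint Q (wmod_meas h n) 1 (fun ω => by rw [abs_of_nonneg (wmod_nonneg n ω)]; exact wmod_le h n ω)

lemma Gr_energy (h : Std Q F X) (hsub : ∀ s t, s ≤ t → X s ≤ᵐ[Q] Q[X t | F s]) {m n : ℕ} (hmn : m ≤ n)
    (k : ℕ) (hk : k ≤ 2 ^ m) :
    ∑ i ∈ Finset.range k, ∫ ω, X (tt m (i+1)) ω *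
      ((Gr Q F X n (tt m i) ω - Gr Q F X n (tt m (i+1)) ω) ^ 2 / Gr Q F X n (tt m i) ω) ∂Q
      ≤ 2 * ∫ ω, wmod X m ω ∂Q := by
  have mG : ∀ u, 0 ≤ u → Measurable (Gr Q F X n u) := fun u hu => (Gr_meas h n hu).mono (h.le u) le_rfl
  have wi : ∀ i j, i ≤ j → Integrable (fun ω => (Gr Q F X n (tt m i) ω - Gr Q F X n (tt m j) ω) * |wmod X m ω|) Q := by
    intro i j hij
    refine bint Q ?_ 1 ?_
    · have := mG _ (tt_nonneg m i); have := mG _ (tt_nonneg m j); have := wmod_meas h m; fun_prop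
    · intro ω
      have h1 := Gr_anti h n ω (tt_mono m hij)
      simp only at h1
      have h2 := Gr_pos h n (tt m j) ω
      have h3 := Gr_le h n (tt m i) ω
      rw [abs_mul, abs_abs, abs_of_nonneg (wmod_nonneg m ω), abs_of_nonneg (by linarith)]
      exact mul_le_one₀ (by linarith) (wmod_nonneg m ω) (wmod_le h m ω)
  have st : ∀ i < k, ∫ ω, X (tt m (i+1)) ω *
      ((Gr Q F X n (tt m i) ω - Gr Q F X n (tt m (i+1)) ω) ^ 2 / Gr Q F X n (tt m i) ω) ∂Q
      ≤ 2 * ∫ ω, (Gr Q F X n (tt m i) ω - Gr Q F X n (tt m (i+1)) ω) * |wmod X m ω| ∂Q := by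
    intro i hi
    have e1 : (i + 1) * 2 ^ (n - m) = i * 2 ^ (n-m) + 2 ^ (n-m) := by ring
    have hle : i * 2 ^ (n-m) + 2 ^ (n-m) ≤ 2 ^ n := by
      rw [← e1]
      calc (i+1) * 2 ^ (n-m) ≤ 2 ^ m * 2 ^ (n-m) := Nat.mul_le_mul_right _ (by lia)
        _ = 2 ^ n := by rw [← pow_add]; congr 1; lia
    have := energy Q (F := fun j => F (tt n j)) (X := fun j => X (tt n j)) (K := Gd Q F X n)
      (fun j => h.le _) (fun i j hij => h.mono (tt_mono n hij)) (fun j => h.meas' _)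
      (fun j ω => ⟨h.pos _ ω, h.le_one _ ω⟩) (Gd_DM h hsub n) (fun j => (Gd_pred h n j).2)
      (wmod_meas h m) (i * 2 ^ (n-m)) (2 ^ (n-m)) (wmod_le h m) ?_
    · simp only [Gr_dy hmn, e1]
      rw [← tt_ref hmn (i+1), e1]
      exact this
    · intro j hj ω
      refine wmod_tt h ω hle (by lia) ?_
      rw [abs_of_nonneg (sub_nonneg.2 (tt_mono n (by lia)))]
      have : tt n (i * 2 ^ (n-m)) ≤ tt n (i * 2 ^ (n-m) + j) := tt_mono n (by lia)
      have e2 : tt n (i * 2 ^ (n-m) + 2 ^ (n-m)) = tt m (i+1) := by rw [← e1, tt_ref hmn]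
      rw [tt_ref hmn] at this
      rw [e2]
      have e3 : tt m (i+1) = tt m i + 1 / 2 ^ m := by unfold tt; push_cast; ring
      linarith
  calc _ ≤ ∑ i ∈ Finset.range k, 2 * ∫ ω, (Gr Q F X n (tt m i) ω - Gr Q F X n (tt m (i+1)) ω) * |wmod X m ω| ∂Q :=
        Finset.sum_le_sum fun i hi => st i (Finset.mem_range.1 hi)
    _ = 2 * ∫ ω, (Gr Q F X n (tt m 0) ω - Gr Q F X n (tt m k) ω) * |wmod X m ω| ∂Q := by
        rw [← Finset.mul_sum, ← integral_finsetSum _ (fun i _ => wi i (i+1) (Nat.le_succ i))]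
        congr 2; ext ω
        rw [← Finset.sum_mul, Finset.sum_range_sub' (fun i => Gr Q F X n (tt m i) ω)]
    _ ≤ _ := by
        gcongr 2 * ?_
        refine integral_mono (wi 0 k (Nat.zero_le k)) (wmod_int h m) (fun ω => ?_)
        simp only [abs_of_nonneg (wmod_nonneg m ω)]
        refine mul_le_of_le_one_left (wmod_nonneg m ω) ?_
        linarith [Gr_le h n (tt m 0) ω, Gr_pos h n (tt m k) ω]

lemma Gr_cauchy (h : Std Q F X) (hsub : ∀ s t, s ≤ t → X s ≤ᵐ[Q] Q[X t | F s]) {l m n : ℕ} (hlm : l ≤ m) (hmn : m ≤ n)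
    (i : ℕ) (hi : i ≤ 2 ^ l) :
    ∫ ω, X (tt l i) ω * (Gr Q F X m (tt l i) ω - Gr Q F X n (tt l i) ω) ^ 2 ∂Q ≤ 128 * ∫ ω, wmod X m ω ∂Q := by
  rw [← tt_ref hlm]
  have hk : i * 2 ^ (m - l) ≤ 2 ^ m := by
    calc i * 2 ^ (m-l) ≤ 2 ^ l * 2 ^ (m-l) := Nat.mul_le_mul_right _ hi
        _ = 2 ^ m := by rw [← pow_add]; congr 1; lia
  have := key_bound Q (F := fun j => F (tt m j)) (X := fun j => X (tt m j)) (fun j => h.le _) (fun j => h.meas' _)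
    (fun j ω => ⟨h.pos _ ω, h.le_one _ ω⟩) (Gr_DM h hsub (le_refl m)) (Gr_DM h hsub hmn) (i * 2 ^ (m - l))
  refine this.trans ?_
  rw [Finset.sum_add_distrib]
  have := Gr_energy h hsub (le_refl m) _ hk
  have := Gr_energy h hsub hmn _ hk
  linarith

noncomputable def BB (Q : Measure Ω) (F : ℝ → MeasurableSpace Ω) (X : ℝ → Ω → ℝ) (n : ℕ) (ω : Ω) : ℝ :=
  ∑ j ∈ Finset.range (2 ^ n), (ee Q F X n j ω - X (tt n j) ω)

lemma BB_nonneg (n : ℕ) (ω : Ω) : 0 ≤ BB Q F X n ω :=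
  Finset.sum_nonneg fun j _ => sub_nonneg.2 (ee_ge n j ω)

lemma BB_meas (h : Std Q F X) (n : ℕ) : Measurable (BB Q F X n) := by
  unfold BB
  exact Finset.measurable_fun_sum _ fun j _ => ((ee_meas h n j).mono (h.le _) le_rfl).sub (h.meas' _)

lemma BB_int (h : Std Q F X) (hsub : ∀ s t, s ≤ t → X s ≤ᵐ[Q] Q[X t | F s]) (n : ℕ) :
    Integrable (BB Q F X n) Q ∧ ∫ ω, BB Q F X n ω ∂Q ≤ ∫ ω, (1:ℝ) ∂Q := by
  have ei : ∀ j, Integrable (ee Q F X n j) Q := fun j =>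
    (integrable_condExp (m := F (tt n j))).congr (ee_ae hsub n j).symm
  have eI : ∀ j, ∫ ω, ee Q F X n j ω ∂Q = ∫ ω, X (tt n (j+1)) ω ∂Q := fun j => by
    rw [integral_congr_ae (ee_ae hsub n j), integral_condExp (h.le _)]
  refine ⟨integrable_finsetSum _ fun j _ => (ei j).sub (h.int _), ?_⟩
  unfold BB
  rw [integral_finsetSum]
  swap
  · exact fun j _ => (ei j).sub (h.int _)
  have : ∀ j ∈ Finset.range (2 ^ n), ∫ ω, (ee Q F X n j ω - X (tt n j) ω) ∂Q =
      ∫ ω, X (tt n (j+1)) ω ∂Q - ∫ ω, X (tt n j) ω ∂Q := fun j _ => by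
    rw [integral_sub (ei j) (h.int _), eI]
  rw [Finset.sum_congr rfl this, Finset.sum_range_sub (fun j => ∫ ω, X (tt n j) ω ∂Q)]
  have h1 : 0 ≤ ∫ ω, X (tt n 0) ω ∂Q := integral_nonneg fun ω => (h.pos _ ω).le
  have h2 : ∫ ω, X (tt n (2^n)) ω ∂Q ≤ ∫ ω, (1:ℝ) ∂Q :=
    integral_mono (h.int _) (integrable_const 1) (fun ω => h.le_one _ ω)
  linarith

lemma Gr_low (h : Std Q F X) (n : ℕ) (ω : Ω) {δ : ℝ} (hδ : 0 < δ) (hX : ∀ u ∈ Set.Icc (0:ℝ) 1, δ ≤ X u ω) :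
    Real.exp (-(BB Q F X n ω / δ)) ≤ Gr Q F X n 1 ω := by
  have : ∀ k ≤ 2 ^ n, Real.exp (-((∑ j ∈ Finset.range k, (ee Q F X n j ω - X (tt n j) ω)) / δ)) ≤ Gd Q F X n k ω := by
    intro k hk
    induction k with
    | zero => simp [Gd]
    | succ k ih =>
      have ih := ih (by lia)
      rw [Finset.sum_range_succ, add_div, neg_add, Real.exp_add]
      simp only [Gd]
      refine mul_le_mul ih ?_ (Real.exp_pos _).le (Gd_pos h n k ω).le
      have hx := hX (tt n k) ⟨tt_nonneg n k, tt_le_one (by lia)⟩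
      have hx0 := h.pos (tt n k) ω
      have he := ee_ge (Q := Q) (F := F) (X := X) n k ω
      have h1 : (ee Q F X n k ω - X (tt n k) ω) / X (tt n k) ω ≤ (ee Q F X n k ω - X (tt n k) ω) / δ := by
        gcongr
      rw [Real.exp_neg, ← inv_div (ee Q F X n k ω)]
      apply inv_anti₀
      · exact div_pos (ee_pos h n k ω) hx0
      · have h2 := Real.add_one_le_exp ((ee Q F X n k ω - X (tt n k) ω) / δ)
        have h3 : ee Q F X n k ω / X (tt n k) ω = (ee Q F X n k ω - X (tt n k) ω) / X (tt n k) ω + 1 := by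
          field_simp; ring
        linarith
  have h1 := this (2 ^ n) le_rfl
  unfold Gr BB
  have : (1:ℝ) * 2 ^ n = ((2 ^ n : ℕ) : ℝ) := by push_cast; ring
  rw [this, Nat.floor_natCast]
  exact h1

end aux2


section aux3
variable {Ω : Type*} [m0 : MeasurableSpace Ω]
variable {Q : Measure Ω} [IsFiniteMeasure Q] {F : ℝ → MeasurableSpace Ω} {X : ℝ → Ω → ℝ}

lemma sumae {f : ℕ → Ω → ℝ} (hf : ∀ k, Integrable (f k) Q) (h0 : ∀ k ω, 0 ≤ f k ω) {C : ℝ}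
    (hC : ∀ k, ∫ ω, f k ω ∂Q ≤ C * (1/8) ^ k) : ∀ᵐ ω ∂Q, ∃ C' : ℝ, ∀ k, f k ω ≤ C' * (1/4) ^ k := by
  have hfin : ∫⁻ ω, ∑' k, ENNReal.ofReal (4 ^ k * f k ω) ∂Q < ⊤ := by
    rw [lintegral_tsum (fun k => ((hf k).aestronglyMeasurable.aemeasurable.const_mul _).ennreal_ofReal)]
    have e : ∀ k, ∫⁻ ω, ENNReal.ofReal (4 ^ k * f k ω) ∂Q ≤ ENNReal.ofReal (C * (1/2) ^ k) := by
      intro k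
      rw [← ofReal_integral_eq_lintegral_ofReal ((hf k).const_mul _)
        (Filter.Eventually.of_forall fun ω => mul_nonneg (by positivity) (h0 k ω))]
      apply ENNReal.ofReal_le_ofReal
      rw [integral_const_mul]
      calc 4 ^ k * ∫ ω, f k ω ∂Q ≤ 4 ^ k * (C * (1/8) ^ k) := by gcongr; exact hC k
        _ = C * (4 * (1/8)) ^ k := by rw [mul_pow]; ring
        _ = C * (1/2) ^ k := by norm_num
    have hC0 : 0 ≤ C := by
      have := (integral_nonneg (h0 0)).trans (hC 0); simpa using this
    refine (ENNReal.tsum_le_tsum e).trans_lt ?_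
    rw [← ENNReal.ofReal_tsum_of_nonneg (fun k => by positivity)
      ((summable_geometric_of_lt_one (by norm_num) (by norm_num)).mul_left C)]
    exact ENNReal.ofReal_lt_top
  have hm : AEMeasurable (fun ω => ∑' k, ENNReal.ofReal (4 ^ k * f k ω)) Q :=
    AEMeasurable.ennreal_tsum (fun k => ((hf k).aestronglyMeasurable.aemeasurable.const_mul _).ennreal_ofReal)
  filter_upwards [ae_lt_top' hm hfin.ne] with ω hω
  refine ⟨(∑' k, ENNReal.ofReal (4 ^ k * f k ω)).toReal, fun k => ?_⟩
  have h1 := ENNReal.le_tsum (f := fun k => ENNReal.ofReal (4 ^ k * f k ω)) k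
  have h2 := (ENNReal.ofReal_le_iff_le_toReal hω.ne).1 h1
  have h3 : (1/4 : ℝ) ^ k * (4 ^ k * f k ω) ≤ (1/4 : ℝ) ^ k * (∑' k, ENNReal.ofReal (4 ^ k * f k ω)).toReal := by
    gcongr
  have h4 : (1/4 : ℝ) ^ k * (4 ^ k * f k ω) = f k ω := by
    rw [← mul_assoc, ← mul_pow]; norm_num
  linarith

lemma cont_of_jumps {f : ℝ → ℝ} (hf : Antitone f)
    (hj : ∀ ε > 0, ∃ m : ℕ, ∀ i < 2 ^ m, f (tt m i) - f (tt m (i+1)) ≤ ε) :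
    ContinuousOn f (Set.Icc 0 1) := by
  have key : ∀ ε > 0, ∃ δ > 0, ∀ x y, 0 ≤ x → x ≤ y → y ≤ 1 → y - x ≤ δ → f x - f y ≤ 2 * ε := by
    intro ε hε
    obtain ⟨m, hm⟩ := hj ε hε
    refine ⟨1 / 2 ^ m, by positivity, fun x y hx hxy hy hd => ?_⟩
    have hp : (0:ℝ) < 2 ^ m := by positivity
    set i := ⌊x * 2 ^ m⌋₊ with hi
    have h1 : tt m i ≤ x := by
      unfold tt; rw [div_le_iff₀ hp]; exact Nat.floor_le (by positivity)
    have h2 : x ≤ tt m (i+1) := by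
      unfold tt; rw [le_div_iff₀ hp]; push_cast; exact (Nat.lt_floor_add_one _).le
    have h3 : tt m (i+1+1) = tt m (i+1) + 1 / 2 ^ m := by unfold tt; push_cast; ring
    have hone : tt m (2^m) = 1 := by unfold tt; push_cast; field_simp
    rcases lt_or_ge i (2^m) with hlt | hge
    · have a1 := hm i hlt
      rcases lt_or_ge (i+1) (2^m) with hlt' | hge'
      · have a2 := hm (i+1) hlt'
        have b1 := hf h1
        have b2 : f (tt m (i+1+1)) ≤ f y := hf (by linarith)
        linarith
      · have : i + 1 = 2 ^ m := by lia
        have b1 := hf h1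
        have b2 : f (tt m (i+1)) ≤ f y := hf (by rw [this, hone]; exact hy)
        linarith
    · have : (1:ℝ) ≤ x := by rw [← hone]; exact (tt_mono m hge).trans h1
      have e : x = y := by linarith
      rw [e]; linarith
  rw [Metric.continuousOn_iff]
  intro x hx ε hε
  obtain ⟨δ, hδ, h⟩ := key (ε / 4) (by positivity)
  refine ⟨δ, hδ, fun y hy hd => ?_⟩
  rw [Real.dist_eq] at hd ⊢
  rw [abs_lt] at hd
  rcases le_total x y with hxy | hxy
  · have := h x y hx.1 hxy hy.2 (by linarith)
    have := hf hxy
    rw [abs_lt]; constructor <;> linarith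
  · have := h y x hy.1 hxy hx.2 (by linarith)
    have := hf hxy
    rw [abs_lt]; constructor <;> linarith

lemma posmin (h : Std Q F X) (ω : Ω) : ∃ δ > 0, ∀ u ∈ Set.Icc (0:ℝ) 1, δ ≤ X u ω := by
  obtain ⟨x, hx, hmin⟩ := isCompact_Icc.exists_isMinOn (Set.nonempty_Icc.2 (zero_le_one' ℝ)) (h.cont ω).continuousOn
  exact ⟨X x ω, h.pos x ω, fun u hu => hmin hu⟩

lemma ev_conv (h : Std Q F X) (hsub : ∀ s t, s ≤ t → X s ≤ᵐ[Q] Q[X t | F s]) {ν : ℕ → ℕ}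
    (hν : StrictMono ν) (hw : ∀ k, ∫ ω, wmod X (ν k) ω ∂Q ≤ (1/8) ^ k) (l i : ℕ) (hi : i ≤ 2 ^ l) :
    ∀ᵐ ω ∂Q, ∃ L, Filter.Tendsto (fun k => Gr Q F X (ν k) (tt l i) ω) Filter.atTop (nhds L) := by
  set u := tt l i with hu
  have mG : ∀ n, Measurable (Gr Q F X n u) := fun n => (Gr_meas h n (tt_nonneg l i)).mono (h.le u) le_rfl
  have := sumae (Q := Q) (C := 128) (f := fun k ω => X u ω * (Gr Q F X (ν (k+l)) u ω - Gr Q F X (ν (k+l+1)) u ω) ^ 2)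
    ?_ ?_ ?_
  · filter_upwards [this] with ω ⟨C, hC⟩
    have hx := h.pos u ω
    have hC0 : 0 ≤ C := by
      have := hC 0
      have h2 : 0 ≤ X u ω * (Gr Q F X (ν (0+l)) u ω - Gr Q F X (ν (0+l+1)) u ω) ^ 2 := by positivity
      simp only [pow_zero, mul_one] at this
      linarith
    have hc : CauchySeq (fun k => Gr Q F X (ν (k+l)) u ω) := by
      refine cauchySeq_of_le_geometric (1/2) (Real.sqrt (C / X u ω)) (by norm_num) (fun k => ?_)
      rw [Real.dist_eq]
      apply abs_le_of_sq_le_sq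
      · rw [mul_pow, Real.sq_sqrt (by positivity)]
        have h1 := hC k
        have e : ((1/2:ℝ)^k)^2 = (1/4)^k := by rw [← pow_mul, mul_comm, pow_mul]; norm_num
        rw [e, div_mul_eq_mul_div, le_div_iff₀ hx]
        have e2 : k + 1 + l = k + l + 1 := by ring
        rw [e2]
        linarith
      · positivity
    obtain ⟨L, hL⟩ := cauchySeq_tendsto_of_complete hc
    exact ⟨L, (Filter.tendsto_add_atTop_iff_nat (f := fun k => Gr Q F X (ν k) u ω) l).1 hL⟩
  · intro k
    refine bint Q ?_ 1 (fun ω => ?_)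
    · have := mG (ν (k+l)); have := mG (ν (k+l+1)); have := h.meas' u; fun_prop
    · have h1 := Gr_pos h (ν (k+l)) u ω
      have h2 := Gr_pos h (ν (k+l+1)) u ω
      have h3 := Gr_le h (ν (k+l)) u ω
      have h4 := Gr_le h (ν (k+l+1)) u ω
      rw [abs_of_nonneg (mul_nonneg (h.pos u ω).le (sq_nonneg _))]
      refine mul_le_one₀ (h.le_one u ω) (sq_nonneg _) ?_
      rw [sq_le_one_iff_abs_le_one, abs_le]; constructor <;> linarith
  · intro k ω
    exact mul_nonneg (h.pos u ω).le (sq_nonneg _)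
  · intro k
    have h1 := Gr_cauchy h hsub (l := l) (m := ν (k+l)) (n := ν (k+l+1))
      ((Nat.le_add_left l k).trans (hν.id_le _)) (hν (Nat.lt_succ_self _)).le i hi
    have h2 := hw (k+l)
    have h3 : (1/8:ℝ)^(k+l) ≤ (1/8)^k := pow_le_pow_of_le_one (by norm_num) (by norm_num) (Nat.le_add_right k l)
    linarith

noncomputable def LL (Q : Measure Ω) (F : ℝ → MeasurableSpace Ω) (X : ℝ → Ω → ℝ) (ν : ℕ → ℕ) (u : ℝ) (ω : Ω) : ℝ :=
  Filter.limsup (fun k => Gr Q F X (ν k) u ω) Filter.atTop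

lemma Gr_bb (h : Std Q F X) (ν : ℕ → ℕ) (u : ℝ) (ω : Ω) :
    Filter.IsBoundedUnder (· ≤ ·) Filter.atTop (fun k => Gr Q F X (ν k) u ω) :=
  Filter.isBoundedUnder_of ⟨1, fun k => Gr_le h _ u ω⟩

lemma Gr_cb (h : Std Q F X) (ν : ℕ → ℕ) (u : ℝ) (ω : Ω) :
    Filter.IsCoboundedUnder (· ≤ ·) Filter.atTop (fun k => Gr Q F X (ν k) u ω) :=
  (Filter.isBoundedUnder_of ⟨0, fun k => (Gr_pos h _ u ω).le⟩ : Filter.IsBoundedUnder (· ≥ ·) Filter.atTop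
    (fun k => Gr Q F X (ν k) u ω)).isCoboundedUnder_le

lemma LL_anti (h : Std Q F X) (ν : ℕ → ℕ) (ω : Ω) : Antitone fun u => LL Q F X ν u ω := fun u v huv =>
  Filter.limsup_le_limsup (Filter.Eventually.of_forall fun k => Gr_anti h (ν k) ω huv) (Gr_cb h ν v ω) (Gr_bb h ν u ω)

lemma LL_zero (ν : ℕ → ℕ) (ω : Ω) : LL Q F X ν 0 ω = 1 := by
  unfold LL; simp only [Gr_zero]; exact Filter.limsup_const 1

lemma LL_nonneg (h : Std Q F X) (ν : ℕ → ℕ) (u : ℝ) (ω : Ω) : 0 ≤ LL Q F X ν u ω :=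
  Filter.le_limsup_of_frequently_le (Filter.Frequently.of_forall fun k => (Gr_pos h _ u ω).le) (Gr_bb h ν u ω)

lemma LL_le (h : Std Q F X) (ν : ℕ → ℕ) (u : ℝ) (ω : Ω) : LL Q F X ν u ω ≤ 1 :=
  Filter.limsup_le_of_le (Gr_cb h ν u ω) (Filter.Eventually.of_forall fun k => Gr_le h _ u ω)

lemma LL_meas (h : Std Q F X) (ν : ℕ → ℕ) {u : ℝ} (hu : 0 ≤ u) : Measurable[F u] (LL Q F X ν u) :=
  Measurable.limsup fun k => Gr_meas h (ν k) hu

lemma LL_conv (h : Std Q F X) (hsub : ∀ s t, s ≤ t → X s ≤ᵐ[Q] Q[X t | F s]) {ν : ℕ → ℕ}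
    (hν : StrictMono ν) (hw : ∀ k, ∫ ω, wmod X (ν k) ω ∂Q ≤ (1/8) ^ k) (l i : ℕ) (hi : i ≤ 2 ^ l) :
    ∀ᵐ ω ∂Q, Filter.Tendsto (fun k => Gr Q F X (ν k) (tt l i) ω) Filter.atTop (nhds (LL Q F X ν (tt l i) ω)) := by
  filter_upwards [ev_conv h hsub hν hw l i hi] with ω ⟨L, hL⟩
  unfold LL
  rw [hL.limsup_eq]; exact hL

lemma LL_meas' (h : Std Q F X) (ν : ℕ → ℕ) {u : ℝ} (hu : 0 ≤ u) : Measurable (LL Q F X ν u) :=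
  (LL_meas h ν hu).mono (h.le u) le_rfl

noncomputable def EE (Q : Measure Ω) (F : ℝ → MeasurableSpace Ω) (X : ℝ → Ω → ℝ) (ν : ℕ → ℕ) (m : ℕ) (ω : Ω) : ℝ :=
  ∑ i ∈ Finset.range (2 ^ m), X (tt m (i+1)) ω * (LL Q F X ν (tt m i) ω - LL Q F X ν (tt m (i+1)) ω) ^ 2

lemma sqb {x a b : ℝ} (hx : 0 < x) (hx1 : x ≤ 1) (ha : 0 ≤ a) (ha1 : a ≤ 1) (hb : 0 ≤ b) (hb1 : b ≤ 1) :
    |x * (a - b) ^ 2| ≤ 1 := by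
  rw [abs_of_nonneg (mul_nonneg hx.le (sq_nonneg _))]
  refine mul_le_one₀ hx1 (sq_nonneg _) ?_
  rw [sq_le_one_iff_abs_le_one, abs_le]; constructor <;> linarith

lemma LL_sqint (h : Std Q F X) (ν : ℕ → ℕ) (m i : ℕ) : Integrable (fun ω =>
    X (tt m (i+1)) ω * (LL Q F X ν (tt m i) ω - LL Q F X ν (tt m (i+1)) ω) ^ 2) Q := by
  refine bint Q ?_ 1 (fun ω => sqb (h.pos _ ω) (h.le_one _ ω) (LL_nonneg h ν _ ω) (LL_le h ν _ ω)
      (LL_nonneg h ν _ ω) (LL_le h ν _ ω))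
  have := LL_meas' h ν (tt_nonneg m i); have := LL_meas' h ν (tt_nonneg m (i+1))
  have := h.meas' (tt m (i+1)); fun_prop

lemma EE_int (h : Std Q F X) (hsub : ∀ s t, s ≤ t → X s ≤ᵐ[Q] Q[X t | F s]) {ν : ℕ → ℕ}
    (hν : StrictMono ν) (hw : ∀ k, ∫ ω, wmod X (ν k) ω ∂Q ≤ (1/8) ^ k) (m : ℕ) :
    ∫ ω, EE Q F X ν m ω ∂Q ≤ 2 * ∫ ω, wmod X m ω ∂Q := by
  unfold EE
  rw [integral_finsetSum _ fun i _ => LL_sqint h ν m i]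
  have ht : Filter.Tendsto (fun k => ∑ i ∈ Finset.range (2 ^ m), ∫ ω, X (tt m (i+1)) ω *
      (Gr Q F X (ν k) (tt m i) ω - Gr Q F X (ν k) (tt m (i+1)) ω) ^ 2 ∂Q) Filter.atTop
      (nhds (∑ i ∈ Finset.range (2 ^ m), ∫ ω, X (tt m (i+1)) ω *
      (LL Q F X ν (tt m i) ω - LL Q F X ν (tt m (i+1)) ω) ^ 2 ∂Q)) := by
    refine tendsto_finsetSum _ fun i hi => ?_
    have hi := Finset.mem_range.1 hi
    refine tendsto_integral_of_dominated_convergence (fun _ => 1) (fun k => ?_) (integrable_const 1)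
      (fun k => Filter.Eventually.of_forall fun ω => ?_) ?_
    · have := (Gr_meas h (ν k) (tt_nonneg m i)).mono (h.le _) le_rfl
      have := (Gr_meas h (ν k) (tt_nonneg m (i+1))).mono (h.le _) le_rfl
      have := h.meas' (tt m (i+1))
      apply Measurable.aestronglyMeasurable
      fun_prop
    · exact sqb (h.pos _ ω) (h.le_one _ ω) (Gr_pos h _ _ ω).le (Gr_le h _ _ ω) (Gr_pos h _ _ ω).le (Gr_le h _ _ ω)
    · filter_upwards [LL_conv h hsub hν hw m i hi.le, LL_conv h hsub hν hw m (i+1) hi] with ω h1 h2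
      exact ((h1.sub h2).pow 2).const_mul _
  refine le_of_tendsto ht ?_
  filter_upwards [Filter.eventually_ge_atTop m] with k hk
  have hmk : m ≤ ν k := hk.trans (hν.id_le k)
  refine le_trans (Finset.sum_le_sum fun i _ => ?_) (Gr_energy h hsub hmk (2^m) le_rfl)
  have m1 := (Gr_meas h (ν k) (tt_nonneg m i)).mono (h.le _) le_rfl
  have m2 := (Gr_meas h (ν k) (tt_nonneg m (i+1))).mono (h.le _) le_rfl
  have m3 := h.meas' (tt m (i+1))
  refine integral_mono (bint Q (by fun_prop) 1 fun ω => sqb (h.pos _ ω) (h.le_one _ ω) (Gr_pos h _ _ ω).le (Gr_le h _ _ ω) (Gr_pos h _ _ ω).le (Gr_le h _ _ ω))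
    (bint Q (by fun_prop) 1 fun ω => ?_) (fun ω => ?_)
  · have p1 := Gr_pos h (ν k) (tt m i) ω
    have p2 := Gr_pos h (ν k) (tt m (i+1)) ω
    have p3 := Gr_le h (ν k) (tt m i) ω
    have p4 := Gr_anti h (ν k) ω (tt_mono m (Nat.le_succ i))
    simp only [Nat.succ_eq_add_one] at p4
    have h0 : 0 ≤ (Gr Q F X (ν k) (tt m i) ω - Gr Q F X (ν k) (tt m (i + 1)) ω) ^ 2 / Gr Q F X (ν k) (tt m i) ω := by positivity
    rw [abs_of_nonneg (mul_nonneg (h.pos _ ω).le h0)]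
    refine mul_le_one₀ (h.le_one _ ω) h0 ?_
    rw [div_le_one p1]; nlinarith
  · have p1 := Gr_pos h (ν k) (tt m i) ω
    have p3 := Gr_le h (ν k) (tt m i) ω
    refine mul_le_mul_of_nonneg_left ?_ (h.pos _ ω).le
    rw [le_div_iff₀ p1]
    exact mul_le_of_le_one_right (sq_nonneg _) p3

lemma EE_ae (h : Std Q F X) (hsub : ∀ s t, s ≤ t → X s ≤ᵐ[Q] Q[X t | F s]) {ν : ℕ → ℕ}
    (hν : StrictMono ν) (hw : ∀ k, ∫ ω, wmod X (ν k) ω ∂Q ≤ (1/8) ^ k) :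
    ∀ᵐ ω ∂Q, Filter.Tendsto (fun k => EE Q F X ν (ν k) ω) Filter.atTop (nhds 0) := by
  have h0 : ∀ k ω, 0 ≤ EE Q F X ν (ν k) ω := fun k ω =>
    Finset.sum_nonneg fun i _ => mul_nonneg (h.pos _ ω).le (sq_nonneg _)
  have := sumae (Q := Q) (C := 2) (f := fun k => EE Q F X ν (ν k))
    (fun k => integrable_finsetSum _ fun i _ => LL_sqint h ν (ν k) i) h0
    (fun k => (EE_int h hsub hν hw (ν k)).trans (by have := hw k; linarith))
  filter_upwards [this] with ω ⟨C, hC⟩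
  refine squeeze_zero (fun k => h0 k ω) hC ?_
  have := (tendsto_pow_atTop_nhds_zero_of_lt_one (show (0:ℝ) ≤ 1/4 by norm_num) (by norm_num)).const_mul C
  simpa using this

lemma LL_pos_ae (h : Std Q F X) (hsub : ∀ s t, s ≤ t → X s ≤ᵐ[Q] Q[X t | F s]) (ν : ℕ → ℕ) :
    ∀ᵐ ω ∂Q, 0 < LL Q F X ν 1 ω := by
  have hfin : ∫⁻ ω, Filter.liminf (fun k => ENNReal.ofReal (BB Q F X (ν k) ω)) Filter.atTop ∂Q < ⊤ := by
    refine (lintegral_liminf_le fun k => (BB_meas h (ν k)).ennreal_ofReal).trans_lt ?_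
    refine lt_of_le_of_lt ?_ (ENNReal.ofReal_lt_top (r := ∫ ω, (1:ℝ) ∂Q))
    refine Filter.liminf_le_of_frequently_le' (Filter.Frequently.of_forall fun k => ?_)
    rw [← ofReal_integral_eq_lintegral_ofReal (BB_int h hsub _).1 (Filter.Eventually.of_forall fun ω => BB_nonneg _ ω)]
    exact ENNReal.ofReal_le_ofReal (BB_int h hsub _).2
  have hm : Measurable fun ω => Filter.liminf (fun k => ENNReal.ofReal (BB Q F X (ν k) ω)) Filter.atTop :=
    Measurable.liminf fun k => (BB_meas h (ν k)).ennreal_ofReal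
  filter_upwards [ae_lt_top hm hfin.ne] with ω hω
  obtain ⟨δ, hδ, hX⟩ := posmin h ω
  obtain ⟨c, hc1, hc2⟩ := exists_between hω
  have hfr := Filter.frequently_lt_of_liminf_lt (by isBoundedDefault) hc1
  have : Real.exp (-(c.toReal / δ)) ≤ LL Q F X ν 1 ω := by
    refine Filter.le_limsup_of_frequently_le (hfr.mono fun k hk => ?_) (Gr_bb h ν 1 ω)
    refine le_trans ?_ (Gr_low h (ν k) ω hδ hX)
    have : BB Q F X (ν k) ω ≤ c.toReal := (ENNReal.ofReal_le_iff_le_toReal hc2.ne).1 hk.le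
    gcongr
  exact (Real.exp_pos _).trans_le this

open Classical in
theorem exist_G (h : Std Q F X) (hsub : ∀ s t, s ≤ t → X s ≤ᵐ[Q] Q[X t | F s])
    (hnull : ∀ A : Set Ω, MeasurableSet A → Q A = 0 → MeasurableSet[F 0] A) :
    ∃ G : ℝ → Ω → ℝ, (∀ u ∈ Set.Icc (0:ℝ) 1, ∀ ω, 0 < G u ω) ∧ (∀ ω, G 0 ω = 1) ∧
      (∀ ω, Antitone fun u => G u ω) ∧ (∀ ω, ContinuousOn (fun u => G u ω) (Set.Icc 0 1)) ∧
      (∀ u ∈ Set.Icc (0:ℝ) 1, Measurable[F u] (G u)) ∧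
      (∀ s t, 0 ≤ s → s ≤ t → t ≤ 1 → MPr Q (F s) (fun ω => X s ω * G s ω) (fun ω => X t ω * G t ω)) := by
  obtain ⟨ν, hν, hw⟩ : ∃ ν : ℕ → ℕ, StrictMono ν ∧ ∀ k, ∫ ω, wmod X (ν k) ω ∂Q ≤ (1/8) ^ k := by
    refine Filter.extraction_forall_of_eventually (P := fun k n => ∫ ω, wmod X n ω ∂Q ≤ (1/8) ^ k) ?_
    intro k
    exact ((wmod_tendsto h).eventually (gt_mem_nhds (show (0:ℝ) < (1/8)^k by positivity))).mono fun n hn => hn.le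
  have hae := (EE_ae h hsub hν hw).and (LL_pos_ae h hsub ν)
  obtain ⟨A, hAsub, hAm, hA0⟩ := exists_measurable_superset_of_null (ae_iff.1 hae)
  have good : ∀ ω, ω ∉ A → Filter.Tendsto (fun k => EE Q F X ν (ν k) ω) Filter.atTop (nhds 0) ∧ 0 < LL Q F X ν 1 ω := by
    intro ω hω
    by_contra hc
    exact hω (hAsub hc)
  have hAae : ∀ᵐ ω ∂Q, ω ∉ A := by rw [ae_iff]; simpa using hA0
  let G : ℝ → Ω → ℝ := fun u ω => if ω ∈ A then 1 else LL Q F X ν u ω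
  have Ga : ∀ ω, Antitone fun u => G u ω := fun ω u v huv => by
    simp only [G]; split_ifs
    · exact le_rfl
    · exact LL_anti h ν ω huv
  have G0 : ∀ ω, G 0 ω = 1 := fun ω => by
    simp only [G]; split_ifs
    · rfl
    · exact LL_zero ν ω
  have Gp : ∀ u ∈ Set.Icc (0:ℝ) 1, ∀ ω, 0 < G u ω := fun u hu ω => by
    simp only [G]; split_ifs with hω
    · exact zero_lt_one
    · exact (good ω hω).2.trans_le (LL_anti h ν ω hu.2)
  have Gc : ∀ ω, ContinuousOn (fun u => G u ω) (Set.Icc 0 1) := fun ω => by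
    by_cases hω : ω ∈ A
    · simp only [G, hω, if_true]; exact continuousOn_const
    · simp only [G, hω, if_false]
      refine cont_of_jumps (LL_anti h ν ω) fun ε hε => ?_
      obtain ⟨δ, hδ, hX⟩ := posmin h ω
      obtain ⟨k, hk⟩ := ((good ω hω).1.eventually (gt_mem_nhds (show (0:ℝ) < δ * ε ^ 2 by positivity))).exists
      refine ⟨ν k, fun i hi => ?_⟩
      have h1 : X (tt (ν k) (i+1)) ω * (LL Q F X ν (tt (ν k) i) ω - LL Q F X ν (tt (ν k) (i+1)) ω) ^ 2
          ≤ EE Q F X ν (ν k) ω :=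
        Finset.single_le_sum (f := fun i => X (tt (ν k) (i+1)) ω * (LL Q F X ν (tt (ν k) i) ω - LL Q F X ν (tt (ν k) (i+1)) ω) ^ 2)
          (fun i _ => mul_nonneg (h.pos _ ω).le (sq_nonneg _)) (Finset.mem_range.2 hi)
      have h2 := hX (tt (ν k) (i+1)) ⟨tt_nonneg _ _, tt_le_one hi⟩
      have h3 : δ * (LL Q F X ν (tt (ν k) i) ω - LL Q F X ν (tt (ν k) (i+1)) ω) ^ 2 < δ * ε ^ 2 :=
        (mul_le_mul_of_nonneg_right h2 (sq_nonneg _)).trans_lt (h1.trans_lt hk)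
      exact (abs_le_of_sq_le_sq' (lt_of_mul_lt_mul_left h3 hδ.le).le hε.le).2
  have Gm : ∀ u ∈ Set.Icc (0:ℝ) 1, Measurable[F u] (G u) := fun u hu =>
    Measurable.ite (h.mono hu.1 _ (hnull A hAm hA0)) measurable_const (LL_meas h ν hu.1)
  have Gm' : ∀ u ∈ Set.Icc (0:ℝ) 1, Measurable (G u) := fun u hu => (Gm u hu).mono (h.le u) le_rfl
  have Gle : ∀ u ∈ Set.Icc (0:ℝ) 1, ∀ ω, G u ω ≤ 1 := fun u hu ω => by
    rw [← G0 ω]; exact Ga ω hu.1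
  have bd : ∀ {x y z : ℝ}, |x| ≤ 1 → 0 < y → y ≤ 1 → 0 < z → z ≤ 1 → ‖x * (y * z)‖ ≤ 1 := by
    intro x y z hx hy hy1 hz hz1
    rw [Real.norm_eq_abs, abs_mul, abs_of_pos (mul_pos hy hz)]
    exact mul_le_one₀ hx (by positivity) (mul_le_one₀ hy1 hz.le hz1)
  have dyad : ∀ l i j : ℕ, i ≤ j → j ≤ 2 ^ l → MPr Q (F (tt l i)) (fun ω => X (tt l i) ω * G (tt l i) ω)
      (fun ω => X (tt l j) ω * G (tt l j) ω) := by
    intro l i j hij hj Z hZ hZb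
    have hZm : Measurable Z := hZ.mono (h.le _) le_rfl
    have lim : ∀ i ≤ 2 ^ l, Filter.Tendsto (fun k => ∫ ω, Z ω * (X (tt l i) ω * Gr Q F X (ν k) (tt l i) ω) ∂Q)
        Filter.atTop (nhds (∫ ω, Z ω * (X (tt l i) ω * G (tt l i) ω) ∂Q)) := by
      intro i hi
      refine tendsto_integral_of_dominated_convergence (fun _ => 1) (fun k => ?_) (integrable_const 1)
        (fun k => Filter.Eventually.of_forall fun ω => ?_) ?_
      · have := (Gr_meas h (ν k) (tt_nonneg l i)).mono (h.le _) le_rfl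
        have := h.meas' (tt l i)
        apply Measurable.aestronglyMeasurable
        fun_prop
      · exact bd (hZb ω) (h.pos _ ω) (h.le_one _ ω) (Gr_pos h _ _ ω) (Gr_le h _ _ ω)
      · filter_upwards [hAae, LL_conv h hsub hν hw l i hi] with ω hω hc
        simp only [G, hω, if_false]
        exact (hc.const_mul _).const_mul _
    refine tendsto_nhds_unique (lim j hj) ((lim i (hij.trans hj)).congr' ?_)
    filter_upwards [Filter.eventually_ge_atTop l] with k hk
    exact ((Gr_DM h hsub (hk.trans (hν.id_le k))).mp i j hij Z hZ hZb).symm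
  have toOne : ∀ s ∈ Set.Icc (0:ℝ) 1, MPr Q (F s) (fun ω => X s ω * G s ω) (fun ω => X 1 ω * G 1 ω) := by
    intro s hs Z hZ hZb
    have hZm : Measurable Z := hZ.mono (h.le _) le_rfl
    let c : ℕ → ℕ := fun n => ⌈s * 2 ^ n⌉₊
    have hc1 : ∀ n, c n ≤ 2 ^ n := fun n => by
      apply Nat.ceil_le.2
      push_cast
      exact mul_le_of_le_one_left (by positivity) hs.2
    have hcs : ∀ n, s ≤ tt n (c n) := fun n => by
      unfold tt; rw [le_div_iff₀ (by positivity)]; exact Nat.le_ceil _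
    have hct : Filter.Tendsto (fun n => tt n (c n)) Filter.atTop (nhds s) :=
      (tendsto_nat_ceil_mul_div_atTop hs.1).comp (tendsto_pow_atTop_atTop_of_one_lt (one_lt_two (α := ℝ)))
    have hin : ∀ n, tt n (c n) ∈ Set.Icc (0:ℝ) 1 := fun n => ⟨tt_nonneg _ _, tt_le_one (hc1 n)⟩
    have lim : Filter.Tendsto (fun n => ∫ ω, Z ω * (X (tt n (c n)) ω * G (tt n (c n)) ω) ∂Q)
        Filter.atTop (nhds (∫ ω, Z ω * (X s ω * G s ω) ∂Q)) := by
      refine tendsto_integral_of_dominated_convergence (fun _ => 1) (fun n => ?_) (integrable_const 1)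
        (fun n => Filter.Eventually.of_forall fun ω => ?_) (Filter.Eventually.of_forall fun ω => ?_)
      · have := Gm' _ (hin n)
        have := h.meas' (tt n (c n))
        apply Measurable.aestronglyMeasurable
        fun_prop
      · exact bd (hZb ω) (h.pos _ ω) (h.le_one _ ω) (Gp _ (hin n) ω) (Gle _ (hin n) ω)
      · refine Filter.Tendsto.const_mul _ (Filter.Tendsto.mul ?_ ?_)
        · exact ((h.cont ω).tendsto s).comp hct
        · have := (Gc ω) s hs
          exact Filter.Tendsto.comp this (tendsto_nhdsWithin_iff.2 ⟨hct, Filter.Eventually.of_forall hin⟩)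
    have e : ∀ n, ∫ ω, Z ω * (X 1 ω * G 1 ω) ∂Q = ∫ ω, Z ω * (X (tt n (c n)) ω * G (tt n (c n)) ω) ∂Q := by
      intro n
      have h1 := dyad n (c n) (2 ^ n) (hc1 n) le_rfl Z (hZ.mono (h.mono (hcs n)) le_rfl) hZb
      have : tt n (2 ^ n) = 1 := by unfold tt; push_cast; field_simp
      rw [this] at h1
      exact h1
    refine tendsto_nhds_unique (tendsto_const_nhds.congr e) lim
  refine ⟨G, Gp, G0, Ga, Gc, Gm, fun s t hs hst ht Z hZ hZb => ?_⟩
  rw [← toOne s ⟨hs, hst.trans ht⟩ Z hZ hZb, ← toOne t ⟨hs.trans hst, ht⟩ Z (hZ.mono (h.mono hst) le_rfl) hZb]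

end aux3


section aux4
variable {Ω : Type*} [m0 : MeasurableSpace Ω]
variable {Q : Measure Ω} [IsFiniteMeasure Q] {F : ℝ → MeasurableSpace Ω} {X : ℝ → Ω → ℝ}

lemma zero_of {f : Ω → ℝ} (h0 : 0 ≤ᵐ[Q] f) (hi : Integrable f Q) (h : ∫ ω, f ω ∂Q ≤ 0) : f =ᵐ[Q] 0 :=
  (integral_eq_zero_iff_of_nonneg_ae h0 hi).1 (le_antisymm h (integral_nonneg_of_ae h0))

lemma bmul {Y f : Ω → ℝ} (hY : Measurable Y) (hb : ∀ ω, |Y ω| ≤ 1) (hf : Integrable f Q) :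
    Integrable (fun ω => Y ω * f ω) Q :=
  hf.bdd_mul (c := 1) hY.aestronglyMeasurable (Filter.Eventually.of_forall hb)

lemma ind_bd (B : Set Ω) (ω : Ω) : |B.indicator (fun _ => (1:ℝ)) ω| ≤ 1 := by
  by_cases h : ω ∈ B <;> simp [h]

lemma ind_nn (B : Set Ω) (ω : Ω) : 0 ≤ B.indicator (fun _ => (1:ℝ)) ω := by
  by_cases h : ω ∈ B <;> simp [h]

lemma strictA {s : ℝ} (hm : F s ≤ m0) {Xs Xt Gs Gt : Ω → ℝ} (hXs : Measurable Xs)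
    (hXt : Measurable Xt) (hGs : Measurable[F s] Gs) (hGt : Measurable Gt)
    (pXs : ∀ ω, 0 < Xs ω ∧ Xs ω ≤ 1) (pXt : ∀ ω, 0 < Xt ω ∧ Xt ω ≤ 1)
    (pGt : ∀ ω, 0 < Gt ω) (hG : ∀ ω, Gt ω ≤ Gs ω) (hG1 : ∀ ω, Gs ω ≤ 1)
    (mp : MPr Q (F s) (fun ω => Xs ω * Gs ω) (fun ω => Xt ω * Gt ω))
    (h : ∀ᵐ ω ∂Q, Xs ω < (Q[Xt | F s]) ω) : ∀ᵐ ω ∂Q, (Q[Gt | F s]) ω < Gs ω := by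
  have pGs : ∀ ω, 0 < Gs ω := fun ω => (pGt ω).trans_le (hG ω)
  have hGs' : Measurable Gs := hGs.mono hm le_rfl
  have iXs : Integrable Xs Q := bint Q hXs 1 fun ω => by rw [abs_of_pos (pXs ω).1]; exact (pXs ω).2
  have iXt : Integrable Xt Q := bint Q hXt 1 fun ω => by rw [abs_of_pos (pXt ω).1]; exact (pXt ω).2
  have iGs : Integrable Gs Q := bint Q hGs' 1 fun ω => by rw [abs_of_pos (pGs ω)]; exact hG1 ω
  have iGt : Integrable Gt Q := bint Q hGt 1 fun ω => by
    rw [abs_of_pos (pGt ω)]; exact (hG ω).trans (hG1 ω)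
  let B : Set Ω := {ω | Gs ω ≤ (Q[Gt | F s]) ω}
  have hB : MeasurableSet[F s] B := measurableSet_le hGs stronglyMeasurable_condExp.measurable
  let Z : Ω → ℝ := B.indicator (fun _ => (1:ℝ))
  have hZ : Measurable[F s] Z := Measurable.indicator measurable_const hB
  have hZm : Measurable Z := hZ.mono hm le_rfl
  have hZb : ∀ ω, |Z ω| ≤ 1 := ind_bd B
  have hZn : ∀ ω, 0 ≤ Z ω := ind_nn B
  have e1 : (fun ω => Z ω * Gs ω - Z ω * Gt ω) =ᵐ[Q] 0 := by
    refine zero_of (Filter.Eventually.of_forall fun ω => ?_) ((bmul hZm hZb iGs).sub (bmul hZm hZb iGt)) ?_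
    · have := mul_le_mul_of_nonneg_left (hG ω) (hZn ω)
      simpa using this
    · rw [integral_sub (bmul hZm hZb iGs) (bmul hZm hZb iGt), ← cint Q hm hZ hZb iGt]
      rw [sub_nonpos]
      refine integral_mono (bmul hZm hZb iGs) (bmul hZm hZb integrable_condExp) fun ω => ?_
      by_cases hω : ω ∈ B
      · exact mul_le_mul_of_nonneg_left hω (hZn ω)
      · simp [Z, hω]
  have hZ' : Measurable[F s] fun ω => Z ω * Gs ω := hZ.mul hGs
  have hZ'b : ∀ ω, |Z ω * Gs ω| ≤ 1 := fun ω => by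
    rw [abs_mul]
    exact mul_le_one₀ (hZb ω) (abs_nonneg _) (by rw [abs_of_pos (pGs ω)]; exact hG1 ω)
  have hZ'm : Measurable fun ω => Z ω * Gs ω := hZ'.mono hm le_rfl
  have e2 : (fun ω => (Z ω * Gs ω) * (Q[Xt | F s]) ω - (Z ω * Gs ω) * Xs ω) =ᵐ[Q] 0 := by
    refine zero_of ?_ ((bmul hZ'm hZ'b integrable_condExp).sub (bmul hZ'm hZ'b iXs)) ?_
    · filter_upwards [h] with ω hω
      have := mul_le_mul_of_nonneg_left hω.le (mul_nonneg (hZn ω) (pGs ω).le)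
      simpa using this
    · rw [integral_sub (bmul hZ'm hZ'b integrable_condExp) (bmul hZ'm hZ'b iXs), cint Q hm hZ' hZ'b iXt]
      have h1 := mp Z hZ hZb
      have h2 : ∫ ω, Z ω * Gs ω * Xt ω ∂Q = ∫ ω, Z ω * (Xt ω * Gt ω) ∂Q := by
        refine integral_congr_ae ?_
        filter_upwards [e1] with ω hω
        simp only [Pi.zero_apply] at hω
        linear_combination Xt ω * hω
      have h3 : ∫ ω, Z ω * Gs ω * Xs ω ∂Q = ∫ ω, Z ω * (Xs ω * Gs ω) ∂Q := by
        congr 1; ext ω; ring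
      rw [h2, h3, h1, sub_self]
  filter_upwards [e2, h] with ω h1 h2
  by_contra hc
  have hω : ω ∈ B := not_lt.1 hc
  have : Z ω = 1 := by simp [Z, hω]
  simp only [this, Pi.zero_apply, one_mul] at h1
  nlinarith [pGs ω]

lemma strictB {s : ℝ} (hm : F s ≤ m0) {Xs Xt Gs Gt : Ω → ℝ} (hXs : Measurable[F s] Xs)
    (hXt : Measurable Xt) (hGs : Measurable[F s] Gs) (hGt : Measurable Gt)
    (pXs : ∀ ω, 0 < Xs ω ∧ Xs ω ≤ 1) (pXt : ∀ ω, 0 < Xt ω ∧ Xt ω ≤ 1)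
    (pGt : ∀ ω, 0 < Gt ω) (hG : ∀ ω, Gt ω ≤ Gs ω) (hG1 : ∀ ω, Gs ω ≤ 1)
    (mp : MPr Q (F s) (fun ω => Xs ω * Gs ω) (fun ω => Xt ω * Gt ω))
    (h : ∀ᵐ ω ∂Q, (Q[Gt | F s]) ω < Gs ω) : ∀ᵐ ω ∂Q, Xs ω < (Q[Xt | F s]) ω := by
  have pGs : ∀ ω, 0 < Gs ω := fun ω => (pGt ω).trans_le (hG ω)
  have hGs' : Measurable Gs := hGs.mono hm le_rfl
  have hXs' : Measurable Xs := hXs.mono hm le_rfl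
  have iXs : Integrable Xs Q := bint Q hXs' 1 fun ω => by rw [abs_of_pos (pXs ω).1]; exact (pXs ω).2
  have iXt : Integrable Xt Q := bint Q hXt 1 fun ω => by rw [abs_of_pos (pXt ω).1]; exact (pXt ω).2
  have iGs : Integrable Gs Q := bint Q hGs' 1 fun ω => by rw [abs_of_pos (pGs ω)]; exact hG1 ω
  have iGt : Integrable Gt Q := bint Q hGt 1 fun ω => by
    rw [abs_of_pos (pGt ω)]; exact (hG ω).trans (hG1 ω)
  let B : Set Ω := {ω | (Q[Xt | F s]) ω ≤ Xs ω}
  have hB : MeasurableSet[F s] B := measurableSet_le stronglyMeasurable_condExp.measurable hXs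
  let Z : Ω → ℝ := B.indicator (fun _ => (1:ℝ))
  have hZ : Measurable[F s] Z := Measurable.indicator measurable_const hB
  have hZm : Measurable Z := hZ.mono hm le_rfl
  have hZb : ∀ ω, |Z ω| ≤ 1 := ind_bd B
  have hZn : ∀ ω, 0 ≤ Z ω := ind_nn B
  have hZ' : Measurable[F s] fun ω => Z ω * Gs ω := hZ.mul hGs
  have hZ'b : ∀ ω, |Z ω * Gs ω| ≤ 1 := fun ω => by
    rw [abs_mul]
    exact mul_le_one₀ (hZb ω) (abs_nonneg _) (by rw [abs_of_pos (pGs ω)]; exact hG1 ω)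
  have hZ'm : Measurable fun ω => Z ω * Gs ω := hZ'.mono hm le_rfl
  have hT : Measurable fun ω => Z ω * Gt ω := hZm.mul hGt
  have hTb : ∀ ω, |Z ω * Gt ω| ≤ 1 := fun ω => by
    rw [abs_mul]
    exact mul_le_one₀ (hZb ω) (abs_nonneg _) (by rw [abs_of_pos (pGt ω)]; exact (hG ω).trans (hG1 ω))
  have e1 : (fun ω => Z ω * Gs ω * Xt ω - Z ω * Gt ω * Xt ω) =ᵐ[Q] 0 := by
    refine zero_of (Filter.Eventually.of_forall fun ω => ?_) ((bmul hZ'm hZ'b iXt).sub (bmul hT hTb iXt)) ?_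
    · have := mul_le_mul_of_nonneg_right (mul_le_mul_of_nonneg_left (hG ω) (hZn ω)) (pXt ω).1.le
      simpa using this
    · rw [integral_sub (bmul hZ'm hZ'b iXt) (bmul hT hTb iXt), ← cint Q hm hZ' hZ'b iXt]
      have h1 := mp Z hZ hZb
      have h2 : ∫ ω, Z ω * Gt ω * Xt ω ∂Q = ∫ ω, Z ω * (Xt ω * Gt ω) ∂Q := by
        congr 1; ext ω; ring
      have h3 : ∫ ω, Z ω * Gs ω * Xs ω ∂Q = ∫ ω, Z ω * (Xs ω * Gs ω) ∂Q := by
        congr 1; ext ω; ring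
      rw [h2, h1, ← h3, sub_nonpos]
      refine integral_mono (bmul hZ'm hZ'b integrable_condExp) (bmul hZ'm hZ'b iXs) fun ω => ?_
      by_cases hω : ω ∈ B
      · exact mul_le_mul_of_nonneg_left hω (mul_nonneg (hZn ω) (pGs ω).le)
      · simp [Z, hω]
  have e2 : (fun ω => Z ω * Gs ω - Z ω * (Q[Gt | F s]) ω) =ᵐ[Q] 0 := by
    refine zero_of ?_ ((bmul hZm hZb iGs).sub (bmul hZm hZb integrable_condExp)) ?_
    · filter_upwards [h] with ω hω
      have := mul_le_mul_of_nonneg_left hω.le (hZn ω)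
      simpa using this
    · rw [integral_sub (bmul hZm hZb iGs) (bmul hZm hZb integrable_condExp), cint Q hm hZ hZb iGt, sub_nonpos]
      refine le_of_eq (integral_congr_ae ?_)
      filter_upwards [e1] with ω hω
      have : Xt ω * (Z ω * Gs ω - Z ω * Gt ω) = 0 := by
        simp only [Pi.zero_apply] at hω
        linear_combination hω
      have := (mul_eq_zero.1 this).resolve_left (pXt ω).1.ne'
      linarith
  filter_upwards [e2, h] with ω h1 h2
  by_contra hc
  have hω : ω ∈ B := not_lt.1 hc
  have : Z ω = 1 := by simp [Z, hω]
  simp only [this, Pi.zero_apply, one_mul] at h1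
  linarith

structure Gd2 (Q : Measure Ω) (F : ℝ → MeasurableSpace Ω) (X G : ℝ → Ω → ℝ) : Prop where
  meas : ∀ t, Measurable[F t] (G t)
  pos : ∀ t ω, 0 < G t ω
  anti : ∀ ω, Antitone fun t => G t ω
  cont : ∀ ω, Continuous fun t => G t ω
  zero : ∀ ω, G 0 ω = 1
  mp : ∀ s t, s ≤ t → MPr Q (F s) (fun ω => X s ω * G s ω) (fun ω => X t ω * G t ω)

noncomputable def gg (u : ℝ) (n i : ℕ) : ℝ := u * (i / (n + 1))

lemma gg_mono {u : ℝ} (hu : 0 ≤ u) (n : ℕ) : Monotone (gg u n) := by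
  intro i j h
  unfold gg
  have : (i : ℝ) ≤ j := by exact_mod_cast h
  gcongr

lemma gg_zero (u : ℝ) (n : ℕ) : gg u n 0 = 0 := by simp [gg]
lemma gg_last (u : ℝ) (n : ℕ) : gg u n (n+1) = u := by unfold gg; push_cast; field_simp

lemma Gd2.dm {G : ℝ → Ω → ℝ} (h : Gd2 Q F X G) {u : ℝ} (hu : 0 ≤ u) (n : ℕ) :
    DM Q (fun i => F (gg u n i)) (fun i => X (gg u n i)) (fun i => G (gg u n i)) where
  meas i := h.meas _
  pos i ω := h.pos _ ω
  anti i ω := h.anti ω (gg_mono hu n (Nat.le_succ i))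
  zero ω := by rw [gg_zero]; exact h.zero ω
  mp i j hij := h.mp _ _ (gg_mono hu n hij)

lemma Gd2.small (hs : Std Q F X) {G : ℝ → Ω → ℝ} (h : Gd2 Q F X G) {u : ℝ} (hu : 0 ≤ u) :
    Filter.Tendsto (fun n => ∑ i ∈ Finset.range (n+1), ∫ ω, X (gg u n (i+1)) ω *
      ((G (gg u n i) ω - G (gg u n (i+1)) ω) ^ 2 / G (gg u n i) ω) ∂Q) Filter.atTop (nhds 0) := by
  have Gm : ∀ t, Measurable (G t) := fun t => (h.meas t).mono (hs.le t) le_rfl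
  have dpos : ∀ n i ω, 0 ≤ G (gg u n i) ω - G (gg u n (i+1)) ω := fun n i ω =>
    sub_nonneg.2 (h.anti ω (gg_mono hu n (Nat.le_succ i)))
  have tpos : ∀ n i ω, 0 ≤ X (gg u n (i+1)) ω *
      ((G (gg u n i) ω - G (gg u n (i+1)) ω) ^ 2 / G (gg u n i) ω) := fun n i ω =>
    mul_nonneg (hs.pos _ ω).le (div_nonneg (sq_nonneg _) (h.pos _ ω).le)
  have tle : ∀ n i ω, X (gg u n (i+1)) ω *
      ((G (gg u n i) ω - G (gg u n (i+1)) ω) ^ 2 / G (gg u n i) ω) ≤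
      (G (gg u n i) ω - G (gg u n (i+1)) ω) ^ 2 / G (gg u n i) ω := fun n i ω =>
    mul_le_of_le_one_left (div_nonneg (sq_nonneg _) (h.pos _ ω).le) (hs.le_one _ ω)
  have tle1 : ∀ n i ω, X (gg u n (i+1)) ω *
      ((G (gg u n i) ω - G (gg u n (i+1)) ω) ^ 2 / G (gg u n i) ω) ≤
      G (gg u n i) ω - G (gg u n (i+1)) ω := fun n i ω => by
    refine (tle n i ω).trans ?_
    rw [div_le_iff₀ (h.pos _ ω), sq]
    exact mul_le_mul_of_nonneg_left (by linarith [h.pos (gg u n (i+1)) ω]) (dpos n i ω)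
  have tele : ∀ n ω, ∑ i ∈ Finset.range (n+1), (G (gg u n i) ω - G (gg u n (i+1)) ω) = 1 - G u ω := by
    intro n ω
    rw [Finset.sum_range_sub' (fun i => G (gg u n i) ω), gg_zero, gg_last, h.zero]
  have tm : ∀ n i, Measurable fun ω => X (gg u n (i+1)) ω *
      ((G (gg u n i) ω - G (gg u n (i+1)) ω) ^ 2 / G (gg u n i) ω) := fun n i =>
    (hs.meas' _).mul ((((Gm _).sub (Gm _)).pow_const 2).div (Gm _))
  have G1 : ∀ n i ω, G (gg u n i) ω ≤ 1 := fun n i ω => by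
    rw [← h.zero ω, ← gg_zero u n]; exact h.anti ω (gg_mono hu n (Nat.zero_le i))
  have e : ∀ n, ∫ ω, ∑ i ∈ Finset.range (n+1), X (gg u n (i+1)) ω *
      ((G (gg u n i) ω - G (gg u n (i+1)) ω) ^ 2 / G (gg u n i) ω) ∂Q =
      ∑ i ∈ Finset.range (n+1), ∫ ω, X (gg u n (i+1)) ω *
      ((G (gg u n i) ω - G (gg u n (i+1)) ω) ^ 2 / G (gg u n i) ω) ∂Q := fun n => by
    refine integral_finsetSum _ fun i _ => bint Q (tm n i) 1 fun ω => ?_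
    rw [abs_of_nonneg (tpos n i ω)]
    linarith [tle1 n i ω, G1 n i ω, h.pos (gg u n (i+1)) ω]
  simp_rw [← e]
  have e0 : (0:ℝ) = ∫ ω : Ω, (0:ℝ) ∂Q := by simp
  rw [e0]
  refine tendsto_integral_of_dominated_convergence (fun _ => 1) (fun n => ?_) (integrable_const 1)
    (fun n => Filter.Eventually.of_forall fun ω => ?_) (Filter.Eventually.of_forall fun ω => ?_)
  · exact (Finset.measurable_fun_sum _ fun i _ => tm n i).aestronglyMeasurable
  · rw [Real.norm_eq_abs, abs_of_nonneg (Finset.sum_nonneg fun i _ => tpos n i ω)]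
    refine (Finset.sum_le_sum fun i _ => tle1 n i ω).trans ?_
    rw [tele]; linarith [h.pos u ω]
  · rw [Metric.tendsto_atTop]
    intro ε hε
    have huc : UniformContinuousOn (fun t => G t ω) (Set.Icc (0:ℝ) u) :=
      isCompact_Icc.uniformContinuousOn_of_continuous (h.cont ω).continuousOn
    rw [Metric.uniformContinuousOn_iff] at huc
    have hGu := h.pos u ω
    obtain ⟨δ, hδ, hd⟩ := huc (ε * G u ω) (by positivity)
    obtain ⟨N, hN⟩ := exists_nat_gt (u / δ)
    refine ⟨N, fun n hn => ?_⟩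
    rw [Real.dist_eq, sub_zero, abs_of_nonneg (Finset.sum_nonneg fun i _ => tpos n i ω)]
    have hstep : ∀ i ∈ Finset.range (n+1), X (gg u n (i+1)) ω *
      ((G (gg u n i) ω - G (gg u n (i+1)) ω) ^ 2 / G (gg u n i) ω) ≤
      (G (gg u n i) ω - G (gg u n (i+1)) ω) * ε := by
      intro i hi
      have hi' : i + 1 ≤ n + 1 := Nat.succ_le_of_lt (Finset.mem_range.1 hi)
      have hin : ∀ j ≤ n + 1, gg u n j ∈ Set.Icc (0:ℝ) u := fun j hj =>
        ⟨by rw [← gg_zero u n]; exact gg_mono hu n (Nat.zero_le j),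
         (gg_mono hu n hj).trans_eq (gg_last u n)⟩
      refine (tle n i ω).trans ?_
      rw [div_le_iff₀ (h.pos _ ω), sq, mul_assoc]
      refine mul_le_mul_of_nonneg_left ?_ (dpos n i ω)
      have hdist : dist (gg u n i) (gg u n (i+1)) < δ := by
        rw [Real.dist_eq, abs_sub_comm]
        have : gg u n (i+1) - gg u n i = u / (n+1) := by unfold gg; push_cast; field_simp; ring
        rw [this, abs_of_nonneg (by positivity), div_lt_iff₀ (by positivity)]
        rw [div_lt_iff₀ hδ] at hN
        have : (N:ℝ) ≤ n := by exact_mod_cast hn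
        nlinarith
      have := hd _ (hin i (by omega)) _ (hin (i+1) hi') hdist
      rw [Real.dist_eq] at this
      have h1 : G u ω ≤ G (gg u n i) ω := h.anti ω (hin i (by omega)).2
      have h2 : ε * G u ω ≤ ε * G (gg u n i) ω := mul_le_mul_of_nonneg_left h1 hε.le
      linarith [le_abs_self (G (gg u n i) ω - G (gg u n (i+1)) ω)]
    refine (Finset.sum_le_sum hstep).trans_lt ?_
    rw [← Finset.sum_mul, tele]
    nlinarith

theorem uniq_G (hs : Std Q F X) {G H : ℝ → Ω → ℝ} (h1 : Gd2 Q F X G) (h2 : Gd2 Q F X H)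
    {u : ℝ} (hu : 0 ≤ u) : G u =ᵐ[Q] H u := by
  have Gm : ∀ t, Measurable (G t) := fun t => (h1.meas t).mono (hs.le t) le_rfl
  have Hm : ∀ t, Measurable (H t) := fun t => (h2.meas t).mono (hs.le t) le_rfl
  have G1 : ∀ ω, G u ω ≤ 1 := fun ω => by rw [← h1.zero ω]; exact h1.anti ω hu
  have H1 : ∀ ω, H u ω ≤ 1 := fun ω => by rw [← h2.zero ω]; exact h2.anti ω hu
  have hle : ∫ ω, X u ω * (G u ω - H u ω) ^ 2 ∂Q ≤ 0 := by
    have lim := ((h1.small hs hu).add (h2.small hs hu)).const_mul 32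
    rw [add_zero, mul_zero] at lim
    refine ge_of_tendsto' lim fun n => ?_
    have := key_bound Q (fun i => hs.le (gg u n i)) (fun i => hs.meas' (gg u n i))
      (fun i ω => ⟨hs.pos _ ω, hs.le_one _ ω⟩) (h1.dm hu n) (h2.dm hu n) (n+1)
    rw [gg_last, Finset.sum_add_distrib] at this
    exact this
  have hz : (fun ω => X u ω * (G u ω - H u ω) ^ 2) =ᵐ[Q] 0 := by
    refine zero_of (Filter.Eventually.of_forall fun ω => mul_nonneg (hs.pos _ ω).le (sq_nonneg _)) ?_ hle
    refine bint Q ((hs.meas' u).mul (((Gm u).sub (Hm u)).pow_const 2)) 1 fun ω => ?_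
    rw [abs_of_nonneg (mul_nonneg (hs.pos _ ω).le (sq_nonneg _))]
    refine mul_le_one₀ (hs.le_one _ ω) (sq_nonneg _) ?_
    have := h1.pos u ω
    have := h2.pos u ω
    have := G1 ω
    have := H1 ω
    rw [sq_le_one_iff_abs_le_one, abs_le]
    constructor <;> linarith
  filter_upwards [hz] with ω hω
  have := (mul_eq_zero.1 hω).resolve_left (hs.pos u ω).ne'
  have := pow_eq_zero_iff (two_ne_zero) |>.1 this
  linarith

end aux4

section aux5
variable {Ω : Type*} [m0 : MeasurableSpace Ω]

noncomputable def cl (T u : ℝ) : ℝ := T * max 0 (min 1 u)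

lemma cl_mem {T : ℝ} (hT : 0 < T) (u : ℝ) : cl T u ∈ Set.Icc (0:ℝ) T := by
  unfold cl
  refine ⟨by positivity, mul_le_of_le_one_right hT.le (max_le zero_le_one (min_le_left _ _))⟩

lemma cl_mono {T : ℝ} (hT : 0 < T) : Monotone (cl T) := by
  intro u v h
  unfold cl
  gcongr

lemma cl_cont (T : ℝ) : Continuous (cl T) := by unfold cl; fun_prop

lemma cl_zero (T : ℝ) : cl T 0 = 0 := by simp [cl]

lemma cl_div {T t : ℝ} (hT : 0 < T) (ht : t ∈ Set.Icc (0:ℝ) T) : cl T (t / T) = t := by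
  unfold cl
  rw [min_eq_right ((div_le_one hT).2 ht.2), max_eq_right (div_nonneg ht.1 hT.le)]
  field_simp

lemma cl_contOn {T : ℝ} (hT : 0 < T) {f : ℝ → ℝ} (hf : ContinuousOn f (Set.Icc 0 T)) :
    Continuous fun u => f (cl T u) :=
  hf.comp_continuous (cl_cont T) (cl_mem hT)

lemma mpr_of_mart {Q : Measure Ω} [IsFiniteMeasure Q] {F : ℝ → MeasurableSpace Ω} {Y : ℝ → Ω → ℝ} {T : ℝ}
    (hF : ∀ t, F t ≤ m0) (h : MartingaleOn F Q Y T) {s t : ℝ} (hs : 0 ≤ s) (hst : s ≤ t) (ht : t ≤ T) :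
    MPr Q (F s) (Y s) (Y t) := by
  intro Z hZ hZb
  rw [← cint Q (hF s) hZ hZb (h.1 t ⟨hs.trans hst, ht⟩).2]
  refine integral_congr_ae ?_
  filter_upwards [h.2 s t hs hst ht] with ω hω
  rw [hω]

lemma condExp_of_mpr {Q : Measure Ω} [IsFiniteMeasure Q] {F : ℝ → MeasurableSpace Ω} {s : ℝ}
    (hF : F s ≤ m0) {A B : Ω → ℝ} (hA : Measurable[F s] A) (iA : Integrable A Q) (iB : Integrable B Q)
    (h : MPr Q (F s) A B) : Q[B | F s] =ᵐ[Q] A := by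
  refine (ae_eq_condExp_of_forall_setIntegral_eq hF iB (fun _ _ _ => iA.integrableOn) (fun S hS _ => ?_)
    hA.stronglyMeasurable.aestronglyMeasurable).symm
  have := h (S.indicator fun _ => (1:ℝ)) (Measurable.indicator measurable_const hS) (ind_bd S)
  rw [← integral_indicator (hF S hS), ← integral_indicator (hF S hS)]
  have e : ∀ f : Ω → ℝ, S.indicator f = fun ω => S.indicator (fun _ => (1:ℝ)) ω * f ω := by
    intro f; ext ω
    by_cases hω : ω ∈ S <;> simp [hω]
  rw [e A, e B]
  exact this.symm

/-- data on the horizon -/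
structure Dat (Q : Measure Ω) (F : ℝ → MeasurableSpace Ω) (c : ℝ → Ω → ℝ) (r T : ℝ) : Prop where
  hT : 0 < T
  hr : 0 ≤ r
  mono : Monotone F
  le : ∀ t, F t ≤ m0
  null : ∀ A : Set Ω, MeasurableSet A → Q A = 0 → MeasurableSet[F 0] A
  ad : ∀ t ∈ Set.Icc (0 : ℝ) T, Measurable[F t] (c t)
  cont : ∀ ω, ContinuousOn (fun t => c t ω) (Set.Icc (0 : ℝ) T)
  mem : ∀ t : ℝ, 0 ≤ t → t < T → ∀ ω, c t ω ∈ Set.Ioo (0 : ℝ) 1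
  last : ∀ ω, c T ω = 1

variable {Q : Measure Ω} {F : ℝ → MeasurableSpace Ω} {c : ℝ → Ω → ℝ} {r T : ℝ}

lemma Dat.bd (h : Dat Q F c r T) {t : ℝ} (ht : t ∈ Set.Icc (0:ℝ) T) (ω : Ω) :
    0 < Real.exp (-(r * t)) * c t ω ∧ Real.exp (-(r * t)) * c t ω ≤ 1 := by
  have h1 : 0 < c t ω ∧ c t ω ≤ 1 := by
    rcases ht.2.lt_or_eq with h' | h'
    · exact ⟨(h.mem t ht.1 h' ω).1, (h.mem t ht.1 h' ω).2.le⟩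
    · rw [h', h.last]; exact ⟨one_pos, le_rfl⟩
  have h2 : Real.exp (-(r * t)) ≤ 1 := by
    rw [Real.exp_le_one_iff]
    have := mul_nonneg h.hr ht.1
    linarith
  exact ⟨mul_pos (Real.exp_pos _) h1.1, mul_le_one₀ h2 h1.1.le h1.2⟩

lemma Dat.Xad (h : Dat Q F c r T) {t : ℝ} (ht : t ∈ Set.Icc (0:ℝ) T) :
    Measurable[F t] (fun ω => Real.exp (-(r * t)) * c t ω) :=
  (h.ad t ht).const_mul _

lemma Dat.std (h : Dat Q F c r T) :
    Std Q (fun u => F (cl T u)) (fun u ω => Real.exp (-(r * cl T u)) * c (cl T u) ω) where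
  mono u v huv := h.mono (cl_mono h.hT huv)
  le t := h.le _
  meas t := h.Xad (cl_mem h.hT t)
  pos t ω := (h.bd (cl_mem h.hT t) ω).1
  le_one t ω := (h.bd (cl_mem h.hT t) ω).2
  cont ω := by
    have h1 := cl_contOn h.hT (h.cont ω)
    have h2 := cl_cont T
    exact (Real.continuous_exp.comp (h2.const_mul r).neg).mul h1

lemma fin_of_good {G : ℝ → Ω → ℝ} (h : Dat Q F c r T) (hG : GoodSurvival F Q c r T G) : IsFiniteMeasure Q := by
  have h1 := (hG.2.2.2.2.1.1 0 ⟨le_rfl, h.hT.le⟩).2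
  have : G 0 = fun _ => (1:ℝ) := funext hG.2.1
  rw [this] at h1
  exact (integrable_const_iff.1 h1).resolve_left one_ne_zero

lemma fin_of_sub (h : Dat Q F c r T)
    (hX : StrictSubmartingaleOn F Q (fun t ω => Real.exp (-(r * t)) * c t ω) T) : IsFiniteMeasure Q := by
  have h1 := (hX.1 T ⟨h.hT.le, le_rfl⟩).2
  simp only [h.last] at h1
  exact (integrable_const_iff.1 h1).resolve_left (by positivity)

lemma gd2_of_good [IsFiniteMeasure Q] {G : ℝ → Ω → ℝ} (h : Dat Q F c r T) (hG : GoodSurvival F Q c r T G) :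
    Gd2 Q (fun u => F (cl T u)) (fun u ω => Real.exp (-(r * cl T u)) * c (cl T u) ω) (fun u => G (cl T u)) where
  meas t := (hG.2.2.2.2.1.1 _ (cl_mem h.hT t)).1
  pos t ω := hG.1 _ (cl_mem h.hT t) ω
  anti ω u v huv := hG.2.2.1 ω (cl_mem h.hT u) (cl_mem h.hT v) (cl_mono h.hT huv)
  cont ω := cl_contOn h.hT (hG.2.2.2.1 ω)
  zero ω := by rw [cl_zero]; exact hG.2.1 ω
  mp s t hst := mpr_of_mart h.le hG.2.2.2.2.2 (cl_mem h.hT s).1 (cl_mono h.hT hst) (cl_mem h.hT t).2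

lemma good_le {G : ℝ → Ω → ℝ} (hG : GoodSurvival F Q c r T G) {t : ℝ} (ht : t ∈ Set.Icc (0:ℝ) T) (ω : Ω) :
    G t ω ≤ 1 := by
  rw [← hG.2.1 ω]
  exact hG.2.2.1 ω ⟨le_rfl, ht.1.trans ht.2⟩ ht ht.1

theorem part_two (h : Dat Q F c r T) {G : ℝ → Ω → ℝ} (hG : GoodSurvival F Q c r T G) :
    StrictSubmartingaleOn F Q (fun t ω => Real.exp (-(r * t)) * c t ω) T := by
  have := fin_of_good h hG
  refine ⟨fun t ht => ⟨h.Xad ht, bint Q ((h.Xad ht).mono (h.le t) le_rfl) 1 fun ω => ?_⟩, fun s t hs hst ht => ?_⟩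
  · rw [abs_of_pos (h.bd ht ω).1]; exact (h.bd ht ω).2
  · have hs' : s ∈ Set.Icc (0:ℝ) T := ⟨hs, hst.le.trans ht⟩
    have ht' : t ∈ Set.Icc (0:ℝ) T := ⟨hs.trans hst.le, ht⟩
    exact strictB (h.le s) (h.Xad hs') ((h.Xad ht').mono (h.le t) le_rfl) (hG.2.2.2.2.1.1 s hs').1
      ((hG.2.2.2.2.1.1 t ht').1.mono (h.le t) le_rfl) (h.bd hs') (h.bd ht') (hG.1 t ht')
      (fun ω => hG.2.2.1 ω hs' ht' hst.le) (good_le hG hs')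
      (mpr_of_mart h.le hG.2.2.2.2.2 hs hst.le ht) (hG.2.2.2.2.1.2 s t hs hst ht)

theorem part_one (h : Dat Q F c r T)
    (hX : StrictSubmartingaleOn F Q (fun t ω => Real.exp (-(r * t)) * c t ω) T) :
    ∃ G : ℝ → Ω → ℝ, GoodSurvival F Q c r T G := by
  have := fin_of_sub h hX
  have hT := h.hT
  obtain ⟨G', p, z, a, co, m, mp⟩ := exist_G h.std (fun s t hst => by
    rcases (cl_mono hT hst).lt_or_eq with h' | h'
    · filter_upwards [hX.2 _ _ (cl_mem hT s).1 h' (cl_mem hT t).2] with ω hω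
      exact hω.le
    · refine Filter.EventuallyEq.le ?_
      simp only [← h']
      rw [condExp_of_stronglyMeasurable (h.le _) (h.Xad (cl_mem hT s)).stronglyMeasurable (h.std.int s)])
    (fun A hA hA0 => by
      have e : F (cl T 0) = F 0 := by rw [cl_zero]
      exact e.symm ▸ h.null A hA hA0)
  have dv : ∀ {t}, t ∈ Set.Icc (0:ℝ) T → t / T ∈ Set.Icc (0:ℝ) 1 := fun {t} ht =>
    ⟨div_nonneg ht.1 hT.le, (div_le_one hT).2 ht.2⟩
  let G : ℝ → Ω → ℝ := fun t => G' (t / T)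
  have Gp : ∀ t ∈ Set.Icc (0:ℝ) T, ∀ ω, 0 < G t ω := fun t ht ω => p _ (dv ht) ω
  have G0 : ∀ ω, G 0 ω = 1 := fun ω => by simp only [G, zero_div]; exact z ω
  have Ga : ∀ ω, Antitone fun t => G t ω := fun ω s t hst => a ω (div_le_div_of_nonneg_right hst hT.le)
  have Gc : ∀ ω, ContinuousOn (fun t => G t ω) (Set.Icc (0:ℝ) T) := fun ω =>
    (co ω).comp (by fun_prop) (fun t ht => dv ht)
  have Gm : ∀ t ∈ Set.Icc (0:ℝ) T, Measurable[F t] (G t) := fun t ht => by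
    have : Measurable[F (cl T (t / T))] (G' (t / T)) := m _ (dv ht)
    rw [cl_div hT ht] at this
    exact this
  have Gle : ∀ t ∈ Set.Icc (0:ℝ) T, ∀ ω, G t ω ≤ 1 := fun t ht ω => by
    rw [← G0 ω]; exact Ga ω ht.1
  have GM : ∀ s t, 0 ≤ s → s ≤ t → t ≤ T → MPr Q (F s) (fun ω => Real.exp (-(r * s)) * c s ω * G s ω)
      (fun ω => Real.exp (-(r * t)) * c t ω * G t ω) := fun s t hs hst ht => by
    have hs' : s ∈ Set.Icc (0:ℝ) T := ⟨hs, hst.trans ht⟩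
    have ht' : t ∈ Set.Icc (0:ℝ) T := ⟨hs.trans hst, ht⟩
    have := mp (s / T) (t / T) (dv hs').1 (div_le_div_of_nonneg_right hst hT.le) (dv ht').2
    simp only [cl_div hT hs', cl_div hT ht'] at this
    exact this
  have Mm : ∀ t ∈ Set.Icc (0:ℝ) T, Measurable[F t] (fun ω => Real.exp (-(r * t)) * c t ω * G t ω) :=
    fun t ht => (h.Xad ht).mul (Gm t ht)
  have Mi : ∀ t ∈ Set.Icc (0:ℝ) T, Integrable (fun ω => Real.exp (-(r * t)) * c t ω * G t ω) Q :=
    fun t ht => bint Q ((Mm t ht).mono (h.le t) le_rfl) 1 fun ω => by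
      rw [abs_of_pos (mul_pos (h.bd ht ω).1 (Gp t ht ω))]
      exact mul_le_one₀ (h.bd ht ω).2 (Gp t ht ω).le (Gle t ht ω)
  refine ⟨G, Gp, G0, fun ω => (Ga ω).antitoneOn _, Gc, ⟨fun t ht => ⟨Gm t ht, bint Q ((Gm t ht).mono (h.le t) le_rfl) 1
    fun ω => ?_⟩, fun s t hs hst ht => ?_⟩, fun t ht => ⟨Mm t ht, Mi t ht⟩, fun s t hs hst ht => ?_⟩
  · rw [abs_of_pos (Gp t ht ω)]; exact Gle t ht ω
  · have hs' : s ∈ Set.Icc (0:ℝ) T := ⟨hs, hst.le.trans ht⟩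
    have ht' : t ∈ Set.Icc (0:ℝ) T := ⟨hs.trans hst.le, ht⟩
    exact strictA (h.le s) ((h.Xad hs').mono (h.le s) le_rfl) ((h.Xad ht').mono (h.le t) le_rfl) (Gm s hs')
      ((Gm t ht').mono (h.le t) le_rfl) (h.bd hs') (h.bd ht') (Gp t ht')
      (fun ω => Ga ω hst.le) (Gle s hs') (GM s t hs hst.le ht) (hX.2 s t hs hst ht)
  · have hs' : s ∈ Set.Icc (0:ℝ) T := ⟨hs, hst.trans ht⟩
    have ht' : t ∈ Set.Icc (0:ℝ) T := ⟨hs.trans hst, ht⟩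
    exact condExp_of_mpr (h.le s) (Mm s hs') (Mi s hs') (Mi t ht') (GM s t hs hst ht)

theorem part_three (h : Dat Q F c r T) {G₁ G₂ : ℝ → Ω → ℝ} (h1 : GoodSurvival F Q c r T G₁)
    (h2 : GoodSurvival F Q c r T G₂) : ∀ᵐ ω ∂Q, ∀ t ∈ Set.Icc (0 : ℝ) T, G₁ t ω = G₂ t ω := by
  have := fin_of_good h h1
  have g1 := gd2_of_good h h1
  have g2 := gd2_of_good h h2
  have hq : ∀ᵐ ω ∂Q, ∀ q : ℚ, G₁ (cl T q) ω = G₂ (cl T q) ω := by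
    rw [ae_all_iff]
    intro q
    rcases le_total 0 (q:ℝ) with hq | hq
    · exact uniq_G h.std g1 g2 hq
    · have : cl T q = 0 := by unfold cl; rw [max_eq_left ((min_le_right _ _).trans hq), mul_zero]
      rw [this]
      exact Filter.Eventually.of_forall fun ω => (h1.2.1 ω).trans (h2.2.1 ω).symm
  filter_upwards [hq] with ω hω t ht
  have : (fun u => G₁ (cl T u) ω) = fun u => G₂ (cl T u) ω :=
    Continuous.ext_on (Rat.denseRange_cast (𝕜 := ℝ)) (g1.cont ω) (g2.cont ω) (by rintro _ ⟨q, rfl⟩; exact hω q)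
  have := congrFun this (t / T)
  simpa only [cl_div h.hT ht] using this

end aux5

/-- In the Black–Scholes setting, with `(F_t)` the augmented Brownian
filtration and `Q_BS` the risk-neutral measure (given by its density with respect to
`P`, with `θ = (μ − r)/σ`), for a pre-default value process `c` the following are
equivalent: (1) `(e^{-rt}c(t))_{t∈[0,T]}` is a strict `(F_t)`-submartingale under
`Q_BS`; (2) there exists a strictly positive process `G` with `G(0)=1`, non-increasing
continuous paths, which is a strict `(F_t)`-supermartingale under `Q_BS` and such that
`(e^{-rt}c(t)G(t))_{t∈[0,T]}` is an `(F_t)`-martingale under `Q_BS`.  Moreover such a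
`G`, if it exists, is unique up to indistinguishability. -/
theorem stmt0 {Ω : Type*} [mΩ : MeasurableSpace Ω] (P : Measure Ω)
    [IsProbabilityMeasure P] (W : ℝ → Ω → ℝ) (hW : IsStdBM P W)
    (T r σ' μ' S0 : ℝ) (hT : 0 < T) (hr : 0 ≤ r) (hσ : 0 < σ') (hS0 : 0 < S0)
    (F : ℝ → MeasurableSpace Ω) (hF : ∀ t : ℝ, F t = natFilt W t ⊔ sigmaNull P)
    (Q_BS : Measure Ω)
    (hQBS : Q_BS = P.withDensity (fun ω => ENNReal.ofReal
      (Real.exp (-(((μ' - r) / σ') * W T ω) - ((μ' - r) / σ') ^ 2 * T / 2))))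
    (c : ℝ → Ω → ℝ)
    (hc_adapted : ∀ t ∈ Set.Icc (0 : ℝ) T, Measurable[F t] (c t))
    (hc_cont : ∀ ω, ContinuousOn (fun t => c t ω) (Set.Icc (0 : ℝ) T))
    (hc_mem : ∀ t : ℝ, 0 ≤ t → t < T → ∀ ω, c t ω ∈ Set.Ioo (0 : ℝ) 1)
    (hc_T : ∀ ω, c T ω = 1) :
    (StrictSubmartingaleOn F Q_BS (fun t ω => Real.exp (-(r * t)) * c t ω) T ↔
      ∃ G : ℝ → Ω → ℝ, GoodSurvival F Q_BS c r T G) ∧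
    (∀ G₁ G₂ : ℝ → Ω → ℝ, GoodSurvival F Q_BS c r T G₁ → GoodSurvival F Q_BS c r T G₂ →
      ∀ᵐ ω ∂Q_BS, ∀ t ∈ Set.Icc (0 : ℝ) T, G₁ t ω = G₂ t ω) := by
  have hD : Dat Q_BS F c r T := by
    refine ⟨hT, hr, ?_, ?_, ?_, hc_adapted, hc_cont, hc_mem, hc_T⟩
    · intro s t hst
      rw [hF, hF]
      refine sup_le_sup_right ?_ _
      exact biSup_mono fun u hu => ⟨hu.1, hu.2.trans hst⟩
    · intro t
      rw [hF]
      refine sup_le (iSup₂_le fun u _ => (hW.1 u).comap_le) ?_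
      exact MeasurableSpace.generateFrom_le fun A hA => hA.1
    · intro A hA hA0
      rw [hF]
      have hac : P ≪ Q_BS := by
        rw [hQBS]
        refine withDensity_absolutelyContinuous' ?_ ?_
        · have := hW.1 T
          apply Measurable.aemeasurable
          fun_prop
        · exact Filter.Eventually.of_forall fun ω => by
            simp only [ne_eq, ENNReal.ofReal_eq_zero, not_le]; exact Real.exp_pos _
      exact (le_sup_right : sigmaNull P ≤ natFilt W 0 ⊔ sigmaNull P) A
        (MeasurableSpace.measurableSet_generateFrom ⟨hA, hac hA0⟩)
  exact ⟨⟨part_one hD, fun ⟨G, hG⟩ => part_two hD hG⟩, fun G₁ G₂ h1 h2 => part_three hD h1 h2⟩
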